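/- arXiv:2312.04762 — 8 statements merged into one kernel-verified Lean document; each statement's English description precedes it below -/
import Mathlib

section
/- Let $K_n$ be the complete graph on $n$ vertices. For each $n$, let $T_1$ and $T_2$ be two independent uniformly random spanning trees of $K_n$, and let $H_n = T_1 \cup T_2$ be the graph whose edge set is the union of their edge sets. Then there exists a constant $c > 0$ such that the probability that $H_n$ has vertex expansion at least $c$ (i.e., for every vertex set $S$ with $0 < |S| \le n/2$, the number of vertices outside $S$ adjacent in $H_n$ to some vertex of $S$ is at least $c\,|S|$) tends to $1$ as $n \to \infty$. -/
/-- `H` has vertex expansion at least `c`: for every nonempty vertex set `S` with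
`|S| ≤ n/2`, the number of vertices outside `S` adjacent in `H` to some vertex of `S`
is at least `c * |S|`. -/
def HasVertexExpansion {n : ℕ} (H : SimpleGraph (Fin n)) (c : ℝ) : Prop :=
  ∀ S : Finset (Fin n), 0 < S.card → (S.card : ℝ) ≤ (n : ℝ) / 2 →
    c * (S.card : ℝ) ≤ (({v : Fin n | v ∉ S ∧ ∃ u ∈ S, H.Adj u v}).ncard : ℝ)

/-!
A rooted forest is determined by its parent map, and so is a tree once its root is fixed.

Making a root of a rooted forest on `n` vertices a child of a vertex of another tree gives, by
Pitman's double count, at least `n ^ (n - 1)` rooted trees, hence at least `n ^ (n - 2)` trees.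

If `T₁ ∪ T₂` does not have vertex expansion `1 / K`, there are disjoint sets `S` and `W` with
`s ≤ n / 2` and `w = ⌊s / K⌋` vertices such that both trees leave `S` only through `W`. Rooting such
a tree in `W` restricts the parents of vertices of `S` to `S ∪ W`, and those of vertices outside
`S ∪ W` to the complement of `S`, so a random tree has this property with probability at most
`n * ((s + w) / n) ^ s * (1 - s / n) ^ (n - s - w)`. In the union bound over `S` and `W`, the square
of this probability beats the `n.choose s * n.choose w` choices: for `K = 24` and large `n` the
bound is at most `1 / n`.
-/

section RootedForests

open Function Set

variable {V : Type*} {f g : V → V} {u v r s : V}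

/-- Rooted forests on `V` are encoded by their parent maps `f : V → V`, whose fixed points are the
roots. `HasRoot f v r` says that the ancestors `f v`, `f (f v)`, … of `v` end at the root `r`. -/
def HasRoot (f : V → V) (v r : V) : Prop :=
  IsFixedPt f r ∧ ∃ k, f^[k] v = r

namespace HasRoot

lemma refl (hr : IsFixedPt f r) : HasRoot f r r := ⟨hr, 0, rfl⟩

lemma of_apply (h : HasRoot f (f v) r) : HasRoot f v r :=
  h.imp_right fun ⟨k, hk⟩ => ⟨k + 1, hk⟩

protected lemma eq (hr : HasRoot f v r) (hs : HasRoot f v s) : r = s := by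
  obtain ⟨hr, j, rfl⟩ := hr
  obtain ⟨hs, k, rfl⟩ := hs
  rw [← hr.iterate k, ← hs.iterate j, ← iterate_add_apply, ← iterate_add_apply, add_comm]

lemma eq_of_isPeriodicPt {m : ℕ} (h : HasRoot f v r) (hm : 0 < m) (hv : IsPeriodicPt f m v) :
    v = r := by
  obtain ⟨hr, k, rfl⟩ := h
  calc v = f^[k * m] v := (hv.const_mul k).symm
    _ = f^[(k * m - k) + k] v := by rw [Nat.sub_add_cancel (Nat.le_mul_of_pos_right k hm)]
    _ = f^[k] v := by rw [iterate_add_apply, hr.iterate]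

@[elab_as_elim]
protected lemma induction {motive : ∀ v, HasRoot f v r → Prop}
    (root : ∀ hr : IsFixedPt f r, motive r (.refl hr))
    (step : ∀ v (h : HasRoot f (f v) r), motive (f v) h → motive v h.of_apply)
    (h : HasRoot f v r) : motive v h := by
  obtain ⟨hr, k, hk⟩ := h
  induction k generalizing v with
  | zero => subst hk; exact root hr
  | succ k ih => exact step v ⟨hr, k, hk⟩ (ih hk)

end HasRoot

lemma hasRoot_of_apply_lt (μ : V → ℕ) (hr : IsFixedPt f r) (hμ : ∀ v ≠ r, μ (f v) < μ v) (v : V) :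
    HasRoot f v r := by
  induction hv : μ v using Nat.strong_induction_on generalizing v with
  | _ m ih =>
    subst hv
    obtain rfl | hvr := eq_or_ne v r
    · exact .refl hr
    · exact (ih _ (hμ v hvr) _ rfl).of_apply

/-- `f` is the parent map of a rooted forest: following parents always ends at a root. -/
def IsForestMap (f : V → V) : Prop :=
  ∀ v, ∃ r, HasRoot f v r

variable [DecidableEq V]

lemma HasRoot.update (hr : IsFixedPt f r) (hu : HasRoot f u s) (hsr : s ≠ r) :
    HasRoot (Function.update f r v) u s := by
  have hs : IsFixedPt (Function.update f r v) s := by rw [IsFixedPt, update_of_ne hsr, hu.1]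
  induction hu using HasRoot.induction with
  | root => exact .refl hs
  | step u _ ih =>
    obtain rfl | hur := eq_or_ne u r
    · rwa [hr] at ih
    · exact .of_apply (by rwa [update_of_ne hur])

lemma IsForestMap.update (hf : IsForestMap f) (hr : IsFixedPt f r) (hv : ¬ HasRoot f v r) :
    IsForestMap (Function.update f r v) := by
  obtain ⟨t, ht⟩ := hf v
  have hr' : HasRoot (Function.update f r v) r t := by
    refine .of_apply ?_
    rw [update_self]
    exact ht.update hr fun htr => hv (htr ▸ ht)
  intro u
  obtain ⟨s, hs⟩ := hf u
  by_cases hsr : s = r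
  · subst hsr
    induction hs using HasRoot.induction with
    | root => exact ⟨t, hr'⟩
    | step u _ ih =>
      obtain rfl | hur := eq_or_ne u s
      · exact ⟨t, hr'⟩
      · exact ih.imp fun _ h => .of_apply (by rwa [update_of_ne hur])
  · exact ⟨s, hs.update hr hsr⟩

lemma compl_fixedPoints_update (f : V → V) (h : v ≠ r) :
    (fixedPoints (Function.update f r v))ᶜ = insert r (fixedPoints f)ᶜ := by
  ext u
  obtain rfl | hur := eq_or_ne u r <;> simp [mem_fixedPoints, IsFixedPt, *]

end RootedForests

section ParentGraph

open Function Set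

variable {V : Type*} {f g : V → V} {a b v r : V}

/-- The forest with parent map `f` as a graph: every vertex is joined to its parent. -/
def parentGraph (f : V → V) : SimpleGraph V :=
  .fromRel fun a b => f a = b

lemma parentGraph_adj : (parentGraph f).Adj a b ↔ a ≠ b ∧ (f a = b ∨ f b = a) := by
  simp [parentGraph]

lemma HasRoot.reachable (h : HasRoot f v r) : (parentGraph f).Reachable v r := by
  induction h using HasRoot.induction with
  | root => rfl
  | step u _ ih =>
    obtain hu | hu := eq_or_ne u (f u)
    · rwa [← hu] at ih
    · exact .trans (SimpleGraph.Adj.reachable (parentGraph_adj.2 ⟨hu, .inl rfl⟩)) ih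

lemma connected_parentGraph (h : ∀ v, HasRoot f v r) : (parentGraph f).Connected :=
  have : Nonempty V := ⟨r⟩
  ⟨fun a b => (h a).reachable.trans (h b).reachable.symm⟩

lemma ncard_edgeSet_parentGraph_le [Finite V] (f : V → V) :
    (parentGraph f).edgeSet.ncard ≤ (fixedPoints f)ᶜ.ncard := by
  suffices (parentGraph f).edgeSet ⊆ (fun v => s(v, f v)) '' (fixedPoints f)ᶜ from
    (ncard_le_ncard this).trans (ncard_image_le (toFinite _))
  intro e he
  induction e using Sym2.ind with | _ a b
  rw [SimpleGraph.mem_edgeSet] at he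
  obtain ⟨hab, rfl | rfl⟩ := parentGraph_adj.1 he
  · exact ⟨a, hab.symm, rfl⟩
  · exact ⟨b, hab, Sym2.eq_swap⟩

lemma isTree_parentGraph [Finite V] (h : ∀ v, HasRoot f v r) : (parentGraph f).IsTree := by
  have hconn := connected_parentGraph h
  refine SimpleGraph.isTree_iff_connected_and_card.2
    ⟨hconn, le_antisymm ?_ hconn.card_vert_le_card_edgeSet_add_one⟩
  have hroots : (fixedPoints f)ᶜ.ncard + 1 ≤ Nat.card V := by
    rw [← ncard_add_ncard_compl (fixedPoints f), add_comm]
    gcongr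
    exact (ncard_pos).2 ⟨r, (h r).1⟩
  rw [Nat.card_coe_set_eq]
  exact (Nat.succ_le_succ (ncard_edgeSet_parentGraph_le f)).trans hroots

lemma eq_of_parentGraph_eq (hf : ∀ v, HasRoot f v r) (hg : IsFixedPt g r)
    (h : parentGraph f = parentGraph g) : f = g := by
  funext v
  induction hf v using HasRoot.induction with
  | root hr => rw [hr, hg]
  | step u _ ih =>
    by_cases hfix : IsFixedPt f u
    · rwa [hfix] at ih
    have hadj : (parentGraph g).Adj u (f u) := h ▸ parentGraph_adj.2 ⟨Ne.symm hfix, .inl rfl⟩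
    obtain hgu | hgu := (parentGraph_adj.1 hadj).2
    · exact hgu.symm
    · have hur : u = r := (hf u).eq_of_isPeriodicPt two_pos (ih.trans hgu)
      exact absurd (hur ▸ (hf r).1) hfix

lemma exists_adj_dist_lt {G : SimpleGraph V} (hG : G.Connected) (h : v ≠ r) :
    ∃ u, G.Adj v u ∧ G.dist u r < G.dist v r := by
  obtain ⟨p, hp⟩ := hG.exists_walk_length_eq_dist v r
  cases p with
  | nil => exact absurd rfl h
  | @cons _ u _ hvu q => exact ⟨u, hvu, hp ▸ Nat.lt_succ_of_le (SimpleGraph.dist_le q)⟩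

lemma exists_parentGraph_eq_of_isTree {T : SimpleGraph V} (hT : T.IsTree) (r : V) :
    ∃ f : V → V, IsFixedPt f r ∧ parentGraph f = T := by
  classical
  choose! next hadj hdist using fun v (hv : v ≠ r) => exists_adj_dist_lt hT.connected hv
  set f := update next r r
  have hr : IsFixedPt f r := update_self ..
  have hf (v : V) (hv : v ≠ r) : f v = next v := update_of_ne hv ..
  have hroot := hasRoot_of_apply_lt (T.dist · r) hr fun v hv => (hf v hv).symm ▸ hdist v hv
  have hle : parentGraph f ≤ T := by
    have hadj_apply (v : V) (hv : v ≠ f v) : T.Adj v (f v) := by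
      obtain rfl | hvr := eq_or_ne v r
      · exact absurd hr.symm hv
      · exact hf v hvr ▸ hadj v hvr
    intro a b hab
    obtain ⟨hne, rfl | rfl⟩ := parentGraph_adj.1 hab
    · exact hadj_apply a hne
    · exact (hadj_apply b hne.symm).symm
  exact ⟨f, hr, hle.antisymm
    ((SimpleGraph.isTree_iff_minimal_connected.1 hT).2 (connected_parentGraph hroot) hle)⟩

end ParentGraph

section CountingForests

open Finset Function

variable {V : Type*} {f : V → V} {r v : V} {j : ℕ}

/-- The parent maps of the rooted forests on `V` with `j` edges. -/
def forestMaps (V : Type*) (j : ℕ) : Set (V → V) :=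
  {f | IsForestMap f ∧ (fixedPoints f)ᶜ.ncard = j}

/-- The pairs `(v, r)` such that `r` is a root of `f` that can be attached below `v`. -/
def attachments (f : V → V) : Set (V × V) :=
  {p | IsFixedPt f p.2 ∧ ¬ HasRoot f p.1 p.2}

lemma ne_of_mem_attachments (h : (v, r) ∈ attachments f) : v ≠ r := by
  rintro rfl
  exact h.2 (.refl h.1)

lemma update_mem_forestMaps [Finite V] [DecidableEq V] (hf : f ∈ forestMaps V j)
    (h : (v, r) ∈ attachments f) : update f r v ∈ forestMaps V (j + 1) := by
  have hr : IsFixedPt f r := h.1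
  refine ⟨hf.1.update hr h.2, ?_⟩
  rw [compl_fixedPoints_update f (ne_of_mem_attachments h),
    Set.ncard_insert_of_notMem (not_not.2 hr), hf.2]

lemma injOn_update_attachments [DecidableEq V] (f : V → V) :
    Set.InjOn (fun p : V × V => update f p.2 p.1) (attachments f) := by
  rintro ⟨v, r⟩ ⟨hr, hv⟩ ⟨w, s⟩ - h
  have hrv : update f s w r = v := by rw [← show update f r v = update f s w from h, update_self]
  obtain rfl | hrs := eq_or_ne r s
  · rw [update_self] at hrv
    rw [hrv]
  · rw [update_of_ne hrs, hr] at hrv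
    exact absurd (hrv ▸ .refl hr) hv

variable [Fintype V]

lemma ncard_attachments (hf : f ∈ forestMaps V j) :
    (attachments f).ncard = Fintype.card V * (Fintype.card V - 1 - j) := by
  classical
  choose root hroot using hf.1
  have hfiber (v : V) : #{r | IsFixedPt f r ∧ ¬ HasRoot f v r} = Fintype.card V - 1 - j := by
    have hroots : (fixedPoints f).ncard = Fintype.card V - j := by
      rw [← hf.2, ← Nat.card_eq_fintype_card, ← Set.ncard_add_ncard_compl (fixedPoints f),
        Nat.add_sub_cancel]
    have herase : ({r | IsFixedPt f r ∧ ¬ HasRoot f v r} : Set V) = fixedPoints f \ {root v} := by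
      ext r
      have : HasRoot f v r ↔ r = root v :=
        ⟨fun h => h.eq (hroot v), fun h => h ▸ hroot v⟩
      simp [mem_fixedPoints, this]
    rw [← Set.ncard_coe_finset, coe_filter_univ, herase,
      Set.ncard_sdiff_singleton_of_mem (show root v ∈ fixedPoints f from (hroot v).1), hroots,
      Nat.sub_right_comm]
  calc (attachments f).ncard = #{p : V × V | IsFixedPt f p.2 ∧ ¬ HasRoot f p.1 p.2} := by
        rw [← Set.ncard_coe_finset, coe_filter_univ, attachments]
    _ = ∑ v, #{r | IsFixedPt f r ∧ ¬ HasRoot f v r} := by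
        simp only [card_filter, ← univ_product_univ, sum_product]
    _ = Fintype.card V * (Fintype.card V - 1 - j) := by simp [hfiber]

/-- Pitman's double count of the pairs consisting of a forest with `j + 1` edges and a distinguished
edge of it, which can be removed to leave a forest with `j` edges. -/
lemma ncard_forestMaps_mul_le (j : ℕ) :
    (forestMaps V j).ncard * (Fintype.card V * (Fintype.card V - 1 - j)) ≤
      (forestMaps V (j + 1)).ncard * (j + 1) := by
  classical
  rw [Set.ncard_eq_toFinset_card', Set.ncard_eq_toFinset_card']
  refine card_mul_le_card_mul (fun f g => ∃ r, ¬ IsFixedPt g r ∧ update g r r = f)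
    (fun f hf => ?_) fun g hg => ?_
  · rw [Set.mem_toFinset] at hf
    rw [← ncard_attachments hf, ← (injOn_update_attachments f).ncard_image, ← Set.ncard_coe_finset]
    refine Set.ncard_le_ncard (Set.image_subset_iff.2 fun ⟨v, r⟩ h => ?_)
    have hr : IsFixedPt f r := h.1
    simp only [Set.mem_preimage, mem_coe, mem_bipartiteAbove, Set.mem_toFinset]
    exact ⟨update_mem_forestMaps hf h, r, by simpa [IsFixedPt] using ne_of_mem_attachments h, by
      rw [update_idem, update_eq_self_iff, hr]⟩
  · rw [Set.mem_toFinset] at hg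
    rw [← hg.2, ← Set.ncard_coe_finset]
    refine le_trans (Set.ncard_le_ncard ?_ (Set.toFinite _))
      (Set.ncard_image_le (f := fun r => update g r r))
    intro f hf
    exact ((mem_bipartiteBelow _).1 (mem_coe.1 hf)).2

lemma choose_mul_pow_le_ncard_forestMaps (V : Type*) [Fintype V] (j : ℕ) :
    (Fintype.card V - 1).choose j * Fintype.card V ^ j ≤ (forestMaps V j).ncard := by
  induction j with
  | zero =>
    have hid : id ∈ forestMaps V 0 := ⟨fun v => ⟨v, .refl rfl⟩, by simp⟩
    simpa [Nat.one_le_iff_ne_zero] using Set.ncard_ne_zero_of_mem hid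
  | succ j ih =>
    refine Nat.le_of_mul_le_mul_right ?_ j.succ_pos
    set n := Fintype.card V
    calc (n - 1).choose (j + 1) * n ^ (j + 1) * (j + 1)
        = (n - 1).choose (j + 1) * (j + 1) * (n ^ j * n) := by ring
      _ = (n - 1).choose j * n ^ j * (n * (n - 1 - j)) := by rw [Nat.choose_succ_right_eq]; ring
      _ ≤ (forestMaps V j).ncard * (n * (n - 1 - j)) := by gcongr
      _ ≤ (forestMaps V (j + 1)).ncard * (j + 1) := ncard_forestMaps_mul_le j

lemma exists_forall_hasRoot_of_mem_forestMaps [Nonempty V]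
    (hf : f ∈ forestMaps V (Fintype.card V - 1)) : ∃ r, ∀ v, HasRoot f v r := by
  have hroots : (fixedPoints f).ncard = 1 := by
    have := Set.ncard_add_ncard_compl (fixedPoints f)
    have := Fintype.card_pos (α := V)
    rw [hf.2, Nat.card_eq_fintype_card] at *
    lia
  obtain ⟨r, hr⟩ := Set.ncard_eq_one.1 hroots
  refine ⟨r, fun v => ?_⟩
  obtain ⟨s, hs⟩ := hf.1 v
  obtain rfl : s = r := hr.subset hs.1
  exact hs

/-- The lower bound in Cayley's formula, with both sides multiplied by `Fintype.card V` to count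
rooted trees. -/
lemma card_pow_le_card_mul_ncard_isTree (V : Type*) [Fintype V] [Nonempty V] :
    Fintype.card V ^ (Fintype.card V - 1) ≤
      Fintype.card V * {T : SimpleGraph V | T.IsTree}.ncard := by
  choose! root hroot using fun f (hf : f ∈ forestMaps V (Fintype.card V - 1)) =>
    exists_forall_hasRoot_of_mem_forestMaps hf
  calc Fintype.card V ^ (Fintype.card V - 1)
      ≤ (forestMaps V (Fintype.card V - 1)).ncard := by
        simpa using choose_mul_pow_le_ncard_forestMaps V (Fintype.card V - 1)
    _ ≤ ((Set.univ : Set V) ×ˢ {T : SimpleGraph V | T.IsTree}).ncard := by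
        refine Set.ncard_le_ncard_of_injOn (fun f => (root f, parentGraph f))
          (fun f hf => ⟨Set.mem_univ _, isTree_parentGraph (hroot f hf)⟩) fun f hf g hg h => ?_
        obtain ⟨hr, hfg⟩ := Prod.mk.injEq .. ▸ h
        exact eq_of_parentGraph_eq (hr ▸ hroot f hf) (hroot g hg (root g)).1 hfg
    _ = Fintype.card V * {T : SimpleGraph V | T.IsTree}.ncard := by
        rw [Set.ncard_prod, Set.ncard_univ, Nat.card_eq_fintype_card]

end CountingForests

section ConfinedTrees

open Finset Function

variable {V : Type*} {H H' : SimpleGraph V} {S W : Finset V} {r : V}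

/-- Every neighbour of `S` outside `S` lies in `W`. -/
def IsConfined (H : SimpleGraph V) (S W : Finset V) : Prop :=
  ∀ u ∈ S, ∀ v ∉ S, H.Adj u v → v ∈ W

lemma IsConfined.mono (hle : H ≤ H') (h : IsConfined H' S W) : IsConfined H S W :=
  fun u hu v hv huv => h u hu v hv (hle huv)

/-- The spanning trees in which every neighbour of `S` outside `S` lies in `W`. -/
def confinedTrees (S W : Finset V) : Set (SimpleGraph V) :=
  {T | T.IsTree ∧ IsConfined T S W}

/-- The number of parent maps on `n` vertices with a fixed root in a set `W` of size `w` that do not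
leave `S ∪ W` from a set `S` of size `s` disjoint from `W`, and do not enter `S` from outside
`S ∪ W`. -/
def confinedTreeBound (n s w : ℕ) : ℕ :=
  n ^ (w - 1) * (s + w) ^ s * (n - s) ^ (n - s - w)

variable [Fintype V]

/-- The possible parents of `v` in a tree with root `r ∈ W` in which every neighbour of `S` outside
`S` lies in `W`. -/
def parentChoices [DecidableEq V] (S W : Finset V) (r v : V) : Finset V :=
  if v = r then {r} else if v ∈ W then univ else if v ∈ S then S ∪ W else Sᶜ

lemma mem_parentChoices [DecidableEq V] {f : V → V} (hf : IsFixedPt f r)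
    (hT : IsConfined (parentGraph f) S W) (v : V) : f v ∈ parentChoices S W r v := by
  have hadj (hne : v ≠ f v) : (parentGraph f).Adj v (f v) := parentGraph_adj.2 ⟨hne, .inl rfl⟩
  unfold parentChoices
  split_ifs with hvr hvW hvS
  · rw [hvr, hf, mem_singleton]
  · exact mem_univ _
  · by_contra h
    rw [mem_union, not_or] at h
    exact h.2 (hT v hvS _ h.1 (hadj fun he => h.1 (he ▸ hvS)))
  · rw [mem_compl]
    exact fun h => hvW (hT _ h v hvS (hadj fun he => hvS (he ▸ h)).symm)

lemma prod_card_parentChoices [DecidableEq V] (hSW : Disjoint S W) (hr : r ∈ W) :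
    ∏ v, #(parentChoices S W r v) = confinedTreeBound (Fintype.card V) #S #W := by
  have hS : ∏ v ∈ S, #(parentChoices S W r v) = (#S + #W) ^ #S := by
    refine prod_eq_pow_card fun v hv => ?_
    have hvW := disjoint_left.1 hSW hv
    have hvr : v ≠ r := fun h => hvW (h ▸ hr)
    simp [parentChoices, hv, hvW, hvr, hSW]
  have hW : ∏ v ∈ W, #(parentChoices S W r v) = Fintype.card V ^ (#W - 1) := by
    rw [← mul_prod_erase _ _ hr, ← card_erase_of_mem hr]
    simp only [parentChoices, if_true, card_singleton, one_mul]
    refine prod_eq_pow_card fun v hv => ?_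
    simp [ne_of_mem_erase hv, mem_of_mem_erase hv]
  have hrest : ∏ v ∈ (S ∪ W)ᶜ, #(parentChoices S W r v) =
      (Fintype.card V - #S) ^ (Fintype.card V - #S - #W) := by
    rw [Nat.sub_sub, ← card_union_of_disjoint hSW, ← card_compl (S ∪ W), ← card_compl S]
    refine prod_eq_pow_card fun v hv => ?_
    obtain ⟨hvS, hvW⟩ := not_or.1 (mem_union.not.1 (mem_compl.1 hv))
    have hvr : v ≠ r := fun h => hvW (h ▸ hr)
    simp [parentChoices, hvS, hvW, hvr]
  rw [← prod_mul_prod_compl (S ∪ W), prod_union hSW, hS, hW, hrest, mul_comm (_ ^ #S),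
    confinedTreeBound]

lemma ncard_confinedTrees_le (hSW : Disjoint S W) (hW : W.Nonempty) :
    (confinedTrees S W).ncard ≤ confinedTreeBound (Fintype.card V) #S #W := by
  classical
  obtain ⟨r, hr⟩ := hW
  rw [← prod_card_parentChoices hSW hr, ← Fintype.card_piFinset, ← Set.ncard_coe_finset]
  refine le_trans (Set.ncard_le_ncard (fun T hT => ?_)) (Set.ncard_image_le (f := parentGraph))
  obtain ⟨f, hf, rfl⟩ := exists_parentGraph_eq_of_isTree hT.1 r
  exact ⟨f, mem_coe.2 (Fintype.mem_piFinset.2 (mem_parentChoices hf hT.2)), rfl⟩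

end ConfinedTrees

section NonexpandingPairs

open Finset

variable {n K : ℕ}

lemma exists_isConfined_of_not_hasVertexExpansion {H : SimpleGraph (Fin n)} (hH : H.Connected)
    (hK : 0 < K) (h : ¬ HasVertexExpansion H (1 / K)) :
    ∃ S W : Finset (Fin n), Disjoint S W ∧ #S ∈ Icc K (n / 2) ∧ #W = #S / K ∧
      IsConfined H S W := by
  classical
  unfold HasVertexExpansion at h
  push Not at h
  obtain ⟨S, hS, hSn, hlt⟩ := h
  set N : Finset (Fin n) := {v | v ∉ S ∧ ∃ u ∈ S, H.Adj u v}
  have hadj {u v : Fin n} (hu : u ∈ S) (hv : v ∉ S) (huv : H.Adj u v) : v ∈ N :=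
    (mem_filter_univ v).2 ⟨hv, u, hu, huv⟩
  have hSn : #S ≤ n / 2 := by
    rw [le_div_iff₀ two_pos] at hSn
    exact (Nat.le_div_iff_mul_le two_pos).2 (by exact_mod_cast hSn)
  have hlt : #N * K < #S := by
    rw [← coe_filter_univ, Set.ncard_coe_finset, one_div_mul_eq_div, lt_div_iff₀ (by simpa)] at hlt
    exact_mod_cast hlt
  have hN : 0 < #N := by
    obtain ⟨a, ha⟩ := card_pos.1 hS
    obtain ⟨b, -, hb⟩ : ∃ b ∈ univ, b ∉ S := exists_mem_notMem_of_card_lt_card (by simp; lia)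
    obtain ⟨d, -, hd, hd'⟩ := (hH.preconnected a b).some.exists_boundary_dart S ha hb
    exact card_pos.2 ⟨d.snd, hadj hd hd' d.adj⟩
  have hNK : #N ≤ #S / K := (Nat.le_div_iff_mul_le hK).2 hlt.le
  have hSK : #S / K ≤ #S := Nat.div_le_self ..
  obtain ⟨W, hNW, hWS, hW⟩ := exists_subsuperset_card_eq (s := N) (t := Sᶜ)
    (fun v hv => mem_compl.2 ((mem_filter_univ v).1 hv).1) hNK
    (by rw [card_compl, Fintype.card_fin]; lia)
  refine ⟨S, W, disjoint_right.2 fun v hv => mem_compl.1 (hWS hv), mem_Icc.2 ⟨?_, hSn⟩, hW,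
    fun u hu v hv huv => hNW (hadj hu hv huv)⟩
  exact (Nat.le_mul_of_pos_left K hN).trans hlt.le

/-- The pairs of spanning trees whose union fails to have vertex expansion `1 / K`. -/
def nonexpandingPairs (n K : ℕ) : Set (SimpleGraph (Fin n) × SimpleGraph (Fin n)) :=
  {p | p.1.IsTree ∧ p.2.IsTree ∧ ¬ HasVertexExpansion (p.1 ⊔ p.2) (1 / K)}

/-- The pairs of disjoint sets of `s` and `w` vertices. -/
def disjointPairs (n s w : ℕ) : Finset (Finset (Fin n) × Finset (Fin n)) :=
  {p ∈ powersetCard s univ ×ˢ powersetCard w univ | Disjoint p.1 p.2}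

lemma mem_disjointPairs {s w : ℕ} {S W : Finset (Fin n)} :
    (S, W) ∈ disjointPairs n s w ↔ (#S = s ∧ #W = w) ∧ Disjoint S W := by
  simp [disjointPairs]

lemma card_disjointPairs_le (n s w : ℕ) : #(disjointPairs n s w) ≤ n.choose s * n.choose w :=
  (card_filter_le ..).trans (by simp)

lemma nonexpandingPairs_subset (hK : 0 < K) :
    nonexpandingPairs n K ⊆ ⋃ s ∈ Icc K (n / 2),
      ⋃ p ∈ disjointPairs n s (s / K), confinedTrees p.1 p.2 ×ˢ confinedTrees p.1 p.2 := by
  rintro ⟨T₁, T₂⟩ ⟨h₁, h₂, h⟩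
  obtain ⟨S, W, hSW, hS, hW, hconf⟩ :=
    exists_isConfined_of_not_hasVertexExpansion (h₁.connected.mono le_sup_left) hK h
  simp only [Set.mem_iUnion]
  refine ⟨#S, hS, (S, W), mem_disjointPairs.2 ⟨⟨rfl, hW⟩, hSW⟩, ⟨h₁, hconf.mono le_sup_left⟩,
    h₂, hconf.mono le_sup_right⟩

lemma ncard_nonexpandingPairs_le (n : ℕ) (hK : 0 < K) :
    (nonexpandingPairs n K).ncard ≤
      ∑ s ∈ Icc K (n / 2), n.choose s * n.choose (s / K) * confinedTreeBound n s (s / K) ^ 2 := by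
  refine (Set.ncard_le_ncard (nonexpandingPairs_subset hK)).trans
    ((set_ncard_biUnion_le ..).trans (sum_le_sum fun s hs => ?_))
  calc (⋃ p ∈ disjointPairs n s (s / K), confinedTrees p.1 p.2 ×ˢ confinedTrees p.1 p.2).ncard
      ≤ ∑ p ∈ disjointPairs n s (s / K), (confinedTrees p.1 p.2 ×ˢ confinedTrees p.1 p.2).ncard :=
        set_ncard_biUnion_le ..
    _ ≤ ∑ p ∈ disjointPairs n s (s / K), confinedTreeBound n s (s / K) ^ 2 := by
        refine sum_le_sum fun ⟨S, W⟩ hp => ?_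
        obtain ⟨⟨rfl, hW⟩, hSW⟩ := mem_disjointPairs.1 hp
        have hWpos : 0 < #W := hW ▸ Nat.div_pos (mem_Icc.1 hs).1 hK
        have hle := ncard_confinedTrees_le hSW (card_pos.1 hWpos)
        rw [hW, Fintype.card_fin] at hle
        rw [Set.ncard_prod, ← sq]
        gcongr
    _ ≤ n.choose s * n.choose (s / K) * confinedTreeBound n s (s / K) ^ 2 := by
        rw [sum_const, smul_eq_mul]
        gcongr
        exact card_disjointPairs_le ..

end NonexpandingPairs

section Estimates

open Filter Topology
open scoped Finset

variable {n s w K : ℕ}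

lemma div_le_half_of_two_mul_le (h : 2 * s ≤ n) : (s / n : ℝ) ≤ 1 / 2 := by
  refine div_le_of_le_mul₀ n.cast_nonneg (by norm_num) ?_
  rify at h
  linarith

lemma choose_mul_pow_mul_one_sub_pow_le_one (n k : ℕ) {p : ℝ} (hp : p ∈ Set.Icc 0 1) :
    n.choose k * p ^ k * (1 - p) ^ (n - k) ≤ 1 := by
  refine le_of_eq_of_le ?_
    (MeasureTheory.measureReal_le_one (μ := ProbabilityTheory.binomial n ⟨p, hp⟩) (s := {k}))
  rw [ProbabilityTheory.binomial_real_singleton]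

lemma choose_mul_pow_le_exp (n w : ℕ) {y : ℝ} (hy : 0 ≤ y) :
    n.choose w * y ^ w ≤ Real.exp (n * y) :=
  calc (n.choose w : ℝ) * y ^ w ≤ n ^ w / w.factorial * y ^ w := by
        gcongr
        exact Nat.choose_le_pow_div w n
    _ = (n * y) ^ w / w.factorial := by ring
    _ ≤ Real.exp (n * y) := Real.pow_div_factorial_le_exp _ (by positivity) w

lemma choose_pow_mul_pow_le_exp_pow (hK : 0 < K) (hw : w * K ≤ s) (hs : s ≤ n) :
    (n.choose w : ℝ) ^ K * (s / n / K : ℝ) ^ s ≤ Real.exp 1 ^ s := by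
  set y : ℝ := s / n / K
  have hy : 0 ≤ y := by positivity
  have hy1 : y ≤ 1 := div_le_one_of_le₀ ((div_le_one_of_le₀ (by exact_mod_cast hs)
    n.cast_nonneg).trans (by exact_mod_cast hK)) K.cast_nonneg
  have hny : n * y * K = s := by
    rw [mul_assoc, div_mul_cancel₀ _ (by positivity)]
    exact mul_div_cancel_of_imp' fun h => by norm_cast at *; lia
  calc (n.choose w : ℝ) ^ K * y ^ s ≤ (n.choose w : ℝ) ^ K * y ^ (w * K) := by
        gcongr 1
        exact pow_le_pow_of_le_one hy hy1 hw
    _ = (n.choose w * y ^ w) ^ K := by ring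
    _ ≤ Real.exp (n * y) ^ K := by
        gcongr
        exact choose_mul_pow_le_exp n w hy
    _ = Real.exp 1 ^ s := by
        rw [← Real.exp_nat_mul, ← Real.exp_nat_mul, mul_one, mul_comm, hny]

lemma confinedTreeBound_eq (hw : 0 < w) (hsw : s + w ≤ n) :
    (confinedTreeBound n s w : ℝ) =
      n ^ (n - 1) * ((s + w) / n) ^ s * (1 - s / n) ^ (n - s - w) := by
  have hn : (n : ℝ) ≠ 0 := by exact_mod_cast (by lia : n ≠ 0)
  have hexp : n - 1 = (w - 1) + s + (n - s - w) := by lia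
  rw [one_sub_div hn, hexp, confinedTreeBound, pow_add, pow_add, div_pow,
    div_pow]
  push_cast [show s ≤ n by lia]
  field_simp

/-- The factor `x ^ s * (1 - x) ^ (n - s)`, with `x = s / n`, absorbs `n.choose s`. -/
lemma choose_mul_choose_mul_confinedTreeBound_sq_le (hK : 2 ≤ K) (hw : 0 < w)
    (hwK : w * K ≤ s) (hs : 2 * s ≤ n) :
    (n.choose s * n.choose w * confinedTreeBound n s w ^ 2 : ℝ) ≤
      (n ^ (n - 1)) ^ 2 * (n.choose w * ((1 + 1 / K) ^ 2 * (s / n)) ^ s) := by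
  have hws : w * 2 ≤ s := (Nat.mul_le_mul_left w hK).trans hwK
  rw [confinedTreeBound_eq hw (by lia)]
  have hx : (s / n : ℝ) ∈ Set.Icc 0 1 :=
    ⟨by positivity, div_le_one_of_le₀ (by exact_mod_cast (by lia : s ≤ n)) n.cast_nonneg⟩
  have hq : ((s + w) / n : ℝ) ≤ (1 + 1 / K) * (s / n) := by
    have : (w : ℝ) ≤ s / K := by
      rw [le_div_iff₀ (by positivity)]
      exact_mod_cast hwK
    rw [← mul_div_assoc, one_add_mul, one_div_mul_eq_div]
    gcongr
  set x : ℝ := s / n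
  set c : ℝ := 1 + 1 / K
  have hx0 : 0 ≤ x := hx.1
  have hx1 : 0 ≤ 1 - x := sub_nonneg.2 hx.2
  have hpow : ((1 - x) ^ (n - s - w)) ^ 2 ≤ (1 - x) ^ (n - s) := by
    rw [← pow_mul]
    exact pow_le_pow_of_le_one hx1 (sub_le_self _ hx0) (by lia)
  calc (n.choose s * n.choose w * (n ^ (n - 1) * ((s + w) / n) ^ s * (1 - x) ^ (n - s - w)) ^ 2 : ℝ)
      ≤ n.choose s * n.choose w *
          (n ^ (n - 1) * (c * x) ^ s * (1 - x) ^ (n - s - w)) ^ 2 := by gcongr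
    _ = (n ^ (n - 1)) ^ 2 * (n.choose w * (c ^ 2 * x) ^ s) *
          (n.choose s * x ^ s * ((1 - x) ^ (n - s - w)) ^ 2) := by
        clear_value c
        ring
    _ ≤ (n ^ (n - 1)) ^ 2 * (n.choose w * (c ^ 2 * x) ^ s) *
          (n.choose s * x ^ s * (1 - x) ^ (n - s)) := by
        gcongr
    _ ≤ (n ^ (n - 1)) ^ 2 * (n.choose w * (c ^ 2 * x) ^ s) := by
        exact mul_le_of_le_one_right (by positivity) (choose_mul_pow_mul_one_sub_pow_le_one n s hx)

lemma choose_mul_pow_sq_le (hw : w * 24 ≤ s) (hs : 2 * s ≤ n) :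
    ((n.choose w : ℝ) * ((1 + 1 / 24) ^ 2 * (s / n)) ^ s) ^ 2 ≤ (s / n) ^ s := by
  obtain ⟨x, hx⟩ : ∃ x : ℝ, x = s / n := ⟨_, rfl⟩
  have hx0 : 0 ≤ x := hx ▸ by positivity
  have hx2 : x ≤ 1 / 2 := hx ▸ div_le_half_of_two_mul_le hs
  -- `1 / 24` is small enough for `3 * (24 * 9) * 2⁻¹¹ ≤ 1`.
  have hbase : Real.exp 1 * (24 * (1 + 1 / 24) ^ 48 * x ^ 23) ≤ x ^ 12 :=
    calc Real.exp 1 * (24 * (1 + 1 / 24) ^ 48 * x ^ 23) ≤ 3 * (24 * 9 * x ^ 23) := by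
          gcongr
          · exact Real.exp_one_lt_three.le
          · norm_num
      _ = 648 * x ^ 11 * x ^ 12 := by ring
      _ ≤ 648 * (1 / 2) ^ 11 * x ^ 12 := by gcongr
      _ ≤ x ^ 12 := mul_le_of_le_one_left (by positivity) (by norm_num)
  have hchoose := choose_pow_mul_pow_le_exp_pow (K := 24) (by norm_num) hw (by lia : s ≤ n)
  push_cast at hchoose
  rw [← hx] at hchoose ⊢
  refine le_of_pow_le_pow_left₀ (n := 12) (by norm_num) (by positivity) ?_
  calc ((n.choose w * ((1 + 1 / 24) ^ 2 * x) ^ s) ^ 2) ^ 12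
      = (n.choose w ^ 24 * (x / 24) ^ s) * (24 * (1 + 1 / 24) ^ 48 * x ^ 23) ^ s := by
        rw [← pow_mul, mul_pow, pow_right_comm _ s, mul_assoc, ← mul_pow (x / 24)]
        congr 3
        ring
    _ ≤ Real.exp 1 ^ s * (24 * (1 + 1 / 24) ^ 48 * x ^ 23) ^ s := by gcongr
    _ ≤ (x ^ 12) ^ s := by
        rw [← mul_pow]
        gcongr
    _ = (x ^ s) ^ 12 := pow_right_comm ..

lemma eventually_div_pow_self_le (m : ℕ) :
    ∀ᶠ n : ℕ in atTop, ∀ s : ℕ, 2 * m ≤ s → 2 * s ≤ n → (s / n : ℝ) ^ s ≤ 1 / n ^ m := by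
  have hlim := tendsto_pow_const_div_const_pow_of_one_lt (2 * m) (one_lt_two (α := ℝ))
  obtain ⟨M, hM⟩ := eventually_atTop.1 (hlim.eventually_le_const one_pos)
  filter_upwards [eventually_ge_atTop (M ^ 2), eventually_gt_atTop 0] with n hnM hn s hms hsn
  have hx2 : (s / n : ℝ) ≤ 1 / 2 := div_le_half_of_two_mul_le hsn
  obtain hsq | hsq := le_or_gt (s ^ 2) n
  · have hdiv : (s / n : ℝ) ^ 2 ≤ 1 / n := by
      rw [div_pow, div_le_div_iff₀ (by positivity) (by positivity), one_mul, sq (n : ℝ)]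
      gcongr
      exact_mod_cast hsq
    calc (s / n : ℝ) ^ s ≤ (s / n) ^ (2 * m) :=
          pow_le_pow_of_le_one (by positivity) (hx2.trans one_half_lt_one.le) hms
      _ = ((s / n) ^ 2) ^ m := pow_mul ..
      _ ≤ (1 / n) ^ m := by gcongr
      _ = 1 / n ^ m := one_div_pow ..
  · have hMs : M ≤ s := (lt_of_pow_lt_pow_left₀ 2 s.zero_le (hnM.trans_lt hsq)).le
    have hpow : (s : ℝ) ^ (2 * m) ≤ 2 ^ s := (div_le_one₀ (by positivity)).1 (hM s hMs)
    calc (s / n : ℝ) ^ s ≤ (1 / 2) ^ s := by gcongr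
      _ = 1 / 2 ^ s := one_div_pow ..
      _ ≤ 1 / (s ^ 2) ^ m := by
          rw [← pow_mul]
          have : 0 < s := by lia
          gcongr
      _ ≤ 1 / n ^ m := by
          gcongr
          exact_mod_cast hsq.le

lemma eventually_choose_mul_choose_mul_confinedTreeBound_sq_le :
    ∀ᶠ n : ℕ in atTop, ∀ s ∈ Finset.Icc 24 (n / 2),
      (n.choose s * n.choose (s / 24) * confinedTreeBound n s (s / 24) ^ 2 : ℝ) ≤
        (n ^ (n - 1)) ^ 2 * (1 / n ^ 4) := by
  filter_upwards [eventually_div_pow_self_le 8] with n hn s hs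
  obtain ⟨hs24, hsn⟩ := Finset.mem_Icc.1 hs
  have hw : s / 24 * 24 ≤ s := Nat.div_mul_le_self ..
  have hs2 : 2 * s ≤ n := by lia
  have hsq : (n.choose (s / 24) * ((1 + 1 / 24) ^ 2 * (s / n)) ^ s : ℝ) ^ 2 ≤ (1 / n ^ 4) ^ 2 := by
    rw [one_div_pow, ← pow_mul]
    exact (choose_mul_pow_sq_le hw hs2).trans (hn s (by lia) hs2)
  refine (choose_mul_choose_mul_confinedTreeBound_sq_le (by norm_num) (by lia) hw hs2).trans ?_
  rw [Nat.cast_ofNat]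
  gcongr
  exact le_of_sq_le_sq hsq (by positivity)

lemma eventually_ncard_nonexpandingPairs_le :
    ∀ᶠ n : ℕ in atTop, ((nonexpandingPairs n 24).ncard : ℝ) ≤
      ({T : SimpleGraph (Fin n) | T.IsTree}.ncard : ℝ) ^ 2 * (1 / n) := by
  filter_upwards [eventually_choose_mul_choose_mul_confinedTreeBound_sq_le, eventually_gt_atTop 0]
    with n hterm hn
  have : NeZero n := ⟨hn.ne'⟩
  have hcayley := card_pow_le_card_mul_ncard_isTree (Fin n)
  rw [Fintype.card_fin] at hcayley
  set N := {T : SimpleGraph (Fin n) | T.IsTree}.ncard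
  calc ((nonexpandingPairs n 24).ncard : ℝ)
      ≤ ∑ s ∈ Finset.Icc 24 (n / 2),
          (n.choose s * n.choose (s / 24) * confinedTreeBound n s (s / 24) ^ 2 : ℝ) := by
        exact_mod_cast ncard_nonexpandingPairs_le n (by norm_num)
    _ ≤ #(Finset.Icc 24 (n / 2)) • ((n ^ (n - 1)) ^ 2 * (1 / n ^ 4) : ℝ) :=
        Finset.sum_le_card_nsmul _ _ _ hterm
    _ ≤ n * ((n * N) ^ 2 * (1 / n ^ 4)) := by
        rw [nsmul_eq_mul]
        gcongr
        · rw [Nat.card_Icc]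
          lia
        · exact_mod_cast hcayley
    _ = N ^ 2 * (1 / n) := by field_simp

lemma tendsto_ncard_nonexpandingPairs_div :
    Tendsto (fun n => ((nonexpandingPairs n 24).ncard : ℝ) /
      ({T : SimpleGraph (Fin n) | T.IsTree}.ncard : ℝ) ^ 2) atTop (𝓝 0) := by
  refine squeeze_zero' (.of_forall fun n => by positivity) ?_ tendsto_one_div_atTop_nhds_zero_nat
  filter_upwards [eventually_ncard_nonexpandingPairs_le] with n hn
  exact div_le_of_le_mul₀ (by positivity) (by positivity) (by rwa [mul_comm])

end Estimates

lemma ncard_isTree_ne_zero (V : Type*) [Finite V] [Nonempty V] :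
    {T : SimpleGraph V | T.IsTree}.ncard ≠ 0 := by
  obtain ⟨T, -, hT⟩ := (SimpleGraph.connected_top (V := V)).exists_isTree_le
  exact Set.ncard_ne_zero_of_mem hT

lemma ncard_expanding_add_ncard_nonexpandingPairs (n K : ℕ) :
    {p : SimpleGraph (Fin n) × SimpleGraph (Fin n) |
        p.1.IsTree ∧ p.2.IsTree ∧ HasVertexExpansion (p.1 ⊔ p.2) (1 / K)}.ncard +
      (nonexpandingPairs n K).ncard = {T : SimpleGraph (Fin n) | T.IsTree}.ncard ^ 2 := by
  rw [← Set.ncard_union_eq (Set.disjoint_left.2 fun p h h' => h'.2.2 h.2.2), sq, ← Set.ncard_prod]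
  congr 1
  ext p
  simp only [nonexpandingPairs, Set.mem_union, Set.mem_ofPred_eq, Set.mem_prod]
  tauto

/-- **Union of two uniformly random spanning trees of `K n` is an expander whp.**
A spanning tree of the complete graph `⊤ : SimpleGraph (Fin n)` is precisely a
`T : SimpleGraph (Fin n)` with `T.IsTree`.  Picking two such trees independently and
uniformly at random, the probability that their union has vertex expansion at least `c`
is the number of favourable pairs divided by the squared number of spanning trees; this
probability tends to `1` as `n → ∞`, for some constant `c > 0`. -/
theorem union_two_random_spanning_trees_expander :
    ∃ c : ℝ, 0 < c ∧
      Filter.Tendsto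
        (fun n : ℕ =>
          (({p : SimpleGraph (Fin n) × SimpleGraph (Fin n) |
                p.1.IsTree ∧ p.2.IsTree ∧ HasVertexExpansion (p.1 ⊔ p.2) c}).ncard : ℝ) /
            ((({T : SimpleGraph (Fin n) | T.IsTree}).ncard : ℝ)) ^ 2)
        Filter.atTop (nhds 1) := by
  refine ⟨1 / (24 : ℕ), by positivity, ?_⟩
  have hlim := tendsto_ncard_nonexpandingPairs_div.const_sub 1
  rw [sub_zero] at hlim
  refine hlim.congr' ?_
  filter_upwards [Filter.eventually_ne_atTop 0] with n hn
  have : NeZero n := ⟨hn⟩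
  have hN := ncard_isTree_ne_zero (Fin n)
  rw [sub_eq_iff_eq_add, ← add_div, ← Nat.cast_add, ncard_expanding_add_ncard_nonexpandingPairs,
    Nat.cast_pow, div_self (by positivity)]
end

section
/- Let $G$ be a finite simple connected graph with at least two vertices, let $\tilde{L} = I - D^{-1/2} A D^{-1/2}$ be its normalized Laplacian, and let $\lambda_2$ be the second smallest eigenvalue of $\tilde{L}$. Then $\lambda_2 / 2 \le h(G)$, where $h(G)$ is the Cheeger constant of $G$. -/
open Finset

/-- The normalized Laplacian `I - D^{-1/2} A D^{-1/2}` of a finite simple graph. -/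
noncomputable def normLapMatrix {n : ℕ} (G : SimpleGraph (Fin n)) [DecidableRel G.Adj] :
    Matrix (Fin n) (Fin n) ℝ :=
  1 - Matrix.diagonal (fun v => (Real.sqrt (G.degree v))⁻¹) * G.adjMatrix ℝ *
      Matrix.diagonal (fun v => (Real.sqrt (G.degree v))⁻¹)

/-!
The Rayleigh quotient of `D^{-1/2} (D - A) D^{-1/2}` at `D^{1/2} f` is
`∑_{v ~ w} (f v - f w)² / ∑_v d_v (f v)²`. On the plane of functions equal to `a` on `S` and to `b`
off `S` it equals `(a - b)² e(S, Sᶜ) / (a² vol S + b² vol Sᶜ)`, which is at most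
`2 e(S, Sᶜ) / vol S` because `(a - b)² ≤ 2 (a² + b²)` and `vol S ≤ vol Sᶜ`. By Courant–Fischer some
nonzero vector of any plane has Rayleigh quotient at least `λ₂`.
-/

open Matrix Module

section CourantFischer

variable {𝕜 ι E : Type*} [RCLike 𝕜] [Fintype ι] [DecidableEq ι] [AddCommGroup E] [Module 𝕜 E]
  {A : Matrix ι ι 𝕜}

lemma star_dotProduct_self_eq_sum_norm_sq_eigencoordinates (hA : A.IsHermitian) (x : ι → 𝕜) :
    star x ⬝ᵥ x =
      ((∑ i, ‖(star (hA.eigenvectorUnitary : Matrix ι ι 𝕜) *ᵥ x) i‖ ^ 2 : ℝ) : 𝕜) := by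
  set U := (hA.eigenvectorUnitary : Matrix ι ι 𝕜)
  calc star x ⬝ᵥ x
      = star (star U *ᵥ x) ⬝ᵥ (star U *ᵥ x) := by
        rw [star_mulVec, star_eq_conjTranspose, conjTranspose_conjTranspose, dotProduct_mulVec,
          vecMul_vecMul, ← star_eq_conjTranspose,
          Unitary.mul_star_self_of_mem hA.eigenvectorUnitary.2, vecMul_one]
    _ = _ := by
        simp only [dotProduct, Pi.star_apply, RCLike.star_def, RCLike.conj_mul, map_sum, map_pow]

lemma star_dotProduct_mulVec_eq_sum_eigenvalues (hA : A.IsHermitian) (x : ι → 𝕜) :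
    star x ⬝ᵥ A *ᵥ x =
      ((∑ i, hA.eigenvalues i *
        ‖(star (hA.eigenvectorUnitary : Matrix ι ι 𝕜) *ᵥ x) i‖ ^ 2 : ℝ) : 𝕜) := by
  set U := (hA.eigenvectorUnitary : Matrix ι ι 𝕜)
  have hdiag : A = U * diagonal (RCLike.ofReal ∘ hA.eigenvalues) * star U := by
    simpa only [Unitary.conjStarAlgAut_apply] using hA.spectral_theorem
  calc star x ⬝ᵥ A *ᵥ x
      = star (star U *ᵥ x) ⬝ᵥ diagonal (RCLike.ofReal ∘ hA.eigenvalues) *ᵥ (star U *ᵥ x) := by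
        conv_lhs => rw [hdiag]
        rw [star_mulVec, star_eq_conjTranspose, conjTranspose_conjTranspose, ← mulVec_mulVec,
          ← mulVec_mulVec, dotProduct_mulVec]
    _ = _ := by
        simp only [dotProduct, mulVec_diagonal, Pi.star_apply, RCLike.star_def, Function.comp_apply,
          map_sum, map_mul, map_pow, ← RCLike.conj_mul]
        exact sum_congr rfl fun i _ => by ring

lemma exists_ne_zero_mul_le_rayleigh_of_card_lt (hA : A.IsHermitian) {I : Finset ι} {l : ℝ}
    (hl : ∀ i ∉ I, l ≤ hA.eigenvalues i) (T : E →ₗ[𝕜] ι → 𝕜) (hI : #I < finrank 𝕜 E) :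
    ∃ c ≠ 0, l * RCLike.re (star (T c) ⬝ᵥ T c) ≤ RCLike.re (star (T c) ⬝ᵥ A *ᵥ T c) := by
  set U := (hA.eigenvectorUnitary : Matrix ι ι 𝕜) with hU
  let coordsOn : E →ₗ[𝕜] I → 𝕜 :=
    LinearMap.funLeft 𝕜 𝕜 ((↑) : I → ι) ∘ₗ (star U).mulVecLin ∘ₗ T
  have : FiniteDimensional 𝕜 E := .of_finrank_pos (Nat.zero_lt_of_lt hI)
  have hker : LinearMap.ker coordsOn ≠ ⊥ :=
    LinearMap.ker_ne_bot_of_finrank_lt (by simpa using hI)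
  obtain ⟨c, hc, hc0⟩ := Submodule.exists_mem_ne_zero_of_ne_bot hker
  have hvanish : ∀ i ∈ I, (star U *ᵥ T c) i = 0 := fun i hi => congr_fun hc ⟨i, hi⟩
  refine ⟨c, hc0, ?_⟩
  rw [star_dotProduct_self_eq_sum_norm_sq_eigencoordinates hA,
    star_dotProduct_mulVec_eq_sum_eigenvalues hA, RCLike.ofReal_re, RCLike.ofReal_re, mul_sum]
  refine sum_le_sum fun i _ => ?_
  by_cases hi : i ∈ I
  · simp [← hU, hvanish i hi]
  · exact mul_le_mul_of_nonneg_right (hl i hi) (sq_nonneg _)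

lemma exists_ne_zero_eigenvalue_mul_le_rayleigh (hA : A.IsHermitian) {n : ℕ} {σ : Fin n ≃ ι}
    (hσ : Monotone (hA.eigenvalues ∘ σ)) (k : Fin n) (T : E →ₗ[𝕜] ι → 𝕜)
    (hk : k < finrank 𝕜 E) :
    ∃ c ≠ 0, hA.eigenvalues (σ k) * RCLike.re (star (T c) ⬝ᵥ T c) ≤
      RCLike.re (star (T c) ⬝ᵥ A *ᵥ T c) := by
  refine exists_ne_zero_mul_le_rayleigh_of_card_lt hA (I := (Iio k).map σ.toEmbedding)
    (fun i hi => ?_) T (by simpa using hk)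
  have hki : k ≤ σ.symm i := by simpa [mem_map_equiv] using hi
  simpa using hσ hki

end CourantFischer

section Cut

variable {V : Type*} [DecidableEq V]

/-- The function equal to `c.1` on `S` and to `c.2` off `S`, linearly in `c`; these are the test
functions detecting the cut `(S, Sᶜ)`. -/
def cutFunction (S : Finset V) : ℝ × ℝ →ₗ[ℝ] V → ℝ where
  toFun c := S.piecewise (fun _ => c.1) (fun _ => c.2)
  map_add' c d := by ext v; by_cases hv : v ∈ S <;> simp [hv]
  map_smul' r c := by ext v; by_cases hv : v ∈ S <;> simp [hv]

lemma cutFunction_apply (S : Finset V) (c : ℝ × ℝ) (v : V) :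
    cutFunction S c v = if v ∈ S then c.1 else c.2 := rfl

variable [Fintype V] (G : SimpleGraph V) [DecidableRel G.Adj]

/-- The volume `vol S` of a vertex set: the sum of the degrees of its vertices. -/
def vol (S : Finset V) : ℝ := ∑ v ∈ S, (G.degree v : ℝ)

lemma sum_degree_mul_cutFunction_sq (S : Finset V) (c : ℝ × ℝ) :
    ∑ v, (G.degree v : ℝ) * cutFunction S c v ^ 2 = c.1 ^ 2 * vol G S + c.2 ^ 2 * vol G Sᶜ := by
  rw [← sum_add_sum_compl S, vol, vol, mul_sum, mul_sum]
  congr 1 <;> refine sum_congr rfl fun v hv => ?_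
  · rw [cutFunction_apply, if_pos hv, mul_comm]
  · rw [cutFunction_apply, if_neg (mem_compl.1 hv), mul_comm]

lemma cutFunction_dotProduct_lapMatrix_mulVec (S : Finset V) (c : ℝ × ℝ) :
    cutFunction S c ⬝ᵥ G.lapMatrix ℝ *ᵥ cutFunction S c =
      (c.1 - c.2) ^ 2 * #(G.interedges S Sᶜ) := by
  set f := cutFunction S c with hf
  have hpair (p : V × V) : (if G.Adj p.1 p.2 then (f p.1 - f p.2) ^ 2 else 0) =
      (c.1 - c.2) ^ 2 * ((if p ∈ G.interedges S Sᶜ then 1 else 0) +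
        if p ∈ G.interedges Sᶜ S then 1 else 0) := by
    simp only [hf, cutFunction_apply, G.mem_interedges_iff, mem_compl]
    by_cases hadj : G.Adj p.1 p.2 <;> by_cases h1 : p.1 ∈ S <;> by_cases h2 : p.2 ∈ S <;>
      simp [hadj, h1, h2, sub_sq_comm c.2]
  have hswap : #(G.interedges Sᶜ S) = #(G.interedges S Sᶜ) :=
    have := G.symm
    Rel.card_interedges_comm Sᶜ S
  rw [← toLinearMap₂'_apply', G.lapMatrix_toLinearMap₂' ℝ, ← Fintype.sum_prod_type']
  simp only [hpair, ← mul_sum, sum_add_distrib, sum_boole, filter_univ_mem, hswap]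
  ring

lemma cutFunction_energy_le {S : Finset V} (hS : 0 < vol G S) (hSc : vol G S ≤ vol G Sᶜ)
    (c : ℝ × ℝ) :
    cutFunction S c ⬝ᵥ G.lapMatrix ℝ *ᵥ cutFunction S c ≤
      2 * (#(G.interedges S Sᶜ) / vol G S) * ∑ v, (G.degree v : ℝ) * cutFunction S c v ^ 2 := by
  rw [cutFunction_dotProduct_lapMatrix_mulVec, sum_degree_mul_cutFunction_sq]
  calc (c.1 - c.2) ^ 2 * #(G.interedges S Sᶜ)
      ≤ (2 * (c.1 ^ 2 + c.2 ^ 2)) * #(G.interedges S Sᶜ) := by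
        gcongr
        linarith [sq_nonneg (c.1 + c.2)]
    _ = 2 * (#(G.interedges S Sᶜ) / vol G S) * (c.1 ^ 2 * vol G S + c.2 ^ 2 * vol G S) := by
        field_simp
    _ ≤ 2 * (#(G.interedges S Sᶜ) / vol G S) * (c.1 ^ 2 * vol G S + c.2 ^ 2 * vol G Sᶜ) := by
        gcongr

lemma sum_degree_mul_cutFunction_sq_pos {S : Finset V} (hS : 0 < vol G S) (hSc : 0 < vol G Sᶜ)
    {c : ℝ × ℝ} (hc : c ≠ 0) : 0 < ∑ v, (G.degree v : ℝ) * cutFunction S c v ^ 2 := by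
  rw [sum_degree_mul_cutFunction_sq]
  rcases Prod.mk_eq_zero.not.1 hc |> not_and_or.1 with h | h <;> positivity

lemma vol_le_vol_compl_iff {S : Finset V} : vol G S ≤ vol G Sᶜ ↔ vol G S ≤ vol G univ / 2 := by
  have hsum : vol G S + vol G Sᶜ = vol G univ := sum_add_sum_compl S _
  constructor <;> intro h <;> linarith

lemma filter_adj_mem_notMem_eq_interedges (S : Finset V) :
    ({p : V × V | G.Adj p.1 p.2 ∧ p.1 ∈ S ∧ p.2 ∉ S} : Finset (V × V)) = G.interedges S Sᶜ := by
  ext p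
  simp only [mem_filter_univ, G.mem_interedges_iff, mem_compl]
  tauto

end Cut

section SqrtDegree

variable {V : Type*} [Fintype V] [DecidableEq V] (G : SimpleGraph V) [DecidableRel G.Adj]

/-- The matrix `D^{1/2}`, where `D` is the diagonal degree matrix. It carries functions on the
vertices to the vectors on which the normalized Laplacian acts. -/
noncomputable def sqrtDegMatrix : Matrix V V ℝ := diagonal fun v => √(G.degree v : ℝ)

lemma sqrtDegMatrix_mul_self : sqrtDegMatrix G * sqrtDegMatrix G = G.degMatrix ℝ := by
  simp only [sqrtDegMatrix, SimpleGraph.degMatrix, diagonal_mul_diagonal,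
    Real.mul_self_sqrt (Nat.cast_nonneg _)]

lemma sqrtDegMatrix_mulVec_dotProduct_self (f : V → ℝ) :
    (sqrtDegMatrix G *ᵥ f) ⬝ᵥ (sqrtDegMatrix G *ᵥ f) = ∑ v, (G.degree v : ℝ) * f v ^ 2 := by
  simp only [sqrtDegMatrix, dotProduct, mulVec_diagonal, ← sq, mul_pow,
    Real.sq_sqrt (Nat.cast_nonneg _)]

lemma sqrtDegMatrix_mulVec_dotProduct_mulVec (A : Matrix V V ℝ) (f : V → ℝ) :
    (sqrtDegMatrix G *ᵥ f) ⬝ᵥ A *ᵥ (sqrtDegMatrix G *ᵥ f) =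
      f ⬝ᵥ (sqrtDegMatrix G * A * sqrtDegMatrix G) *ᵥ f := by
  have hvec : sqrtDegMatrix G *ᵥ f = f ᵥ* sqrtDegMatrix G := by
    rw [← mulVec_transpose, sqrtDegMatrix, diagonal_transpose]
  rw [← mulVec_mulVec, ← mulVec_mulVec, dotProduct_mulVec f, ← hvec]

end SqrtDegree

lemma sqrtDegMatrix_mul_normLapMatrix_mul_sqrtDegMatrix {n : ℕ} (G : SimpleGraph (Fin n))
    [DecidableRel G.Adj] (hdeg : ∀ v, 0 < G.degree v) :
    sqrtDegMatrix G * normLapMatrix G * sqrtDegMatrix G = G.lapMatrix ℝ := by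
  set R := diagonal fun v => (√(G.degree v : ℝ))⁻¹ with hR
  have hsqrt (v) : √(G.degree v : ℝ) ≠ 0 := (Real.sqrt_pos.2 (mod_cast hdeg v)).ne'
  have hleft : sqrtDegMatrix G * R = 1 := by
    simp only [sqrtDegMatrix, hR, diagonal_mul_diagonal, mul_inv_cancel₀ (hsqrt _), diagonal_one]
  have hright : R * sqrtDegMatrix G = 1 := mul_eq_one_comm.1 hleft
  calc sqrtDegMatrix G * normLapMatrix G * sqrtDegMatrix G
      = sqrtDegMatrix G * sqrtDegMatrix G
          - (sqrtDegMatrix G * R) * G.adjMatrix ℝ * (R * sqrtDegMatrix G) := by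
        rw [normLapMatrix, ← hR]
        noncomm_ring
    _ = G.lapMatrix ℝ := by
        rw [hleft, hright, sqrtDegMatrix_mul_self, one_mul, mul_one, SimpleGraph.lapMatrix]

theorem cheeger_lower_bound_general {n : ℕ} (hn : 1 < n) (G : SimpleGraph (Fin n))
    [DecidableRel G.Adj] (hdeg : ∀ v, 0 < G.degree v)
    (hL : (normLapMatrix G).IsHermitian)
    (μ : Fin n → ℝ) (hmono : Monotone μ)
    (hperm : ∃ σ : Equiv.Perm (Fin n), hL.eigenvalues ∘ σ = μ)
    (S : Finset (Fin n)) (hS : S.Nonempty)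
    (hvol : (∑ v ∈ S, (G.degree v : ℝ)) ≤ (∑ v : Fin n, (G.degree v : ℝ)) / 2) :
    μ ⟨1, hn⟩ / 2 ≤
      ((Finset.univ.filter
          (fun p : Fin n × Fin n => G.Adj p.1 p.2 ∧ p.1 ∈ S ∧ p.2 ∉ S)).card : ℝ) /
        (∑ v ∈ S, (G.degree v : ℝ)) := by
  obtain ⟨σ, rfl⟩ := hperm
  have hS_pos : 0 < vol G S := sum_pos (fun v _ => mod_cast hdeg v) hS
  have hS_compl : vol G S ≤ vol G Sᶜ := (vol_le_vol_compl_iff G).2 hvol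
  obtain ⟨c, hc, hrayleigh⟩ := exists_ne_zero_eigenvalue_mul_le_rayleigh hL hmono ⟨1, hn⟩
    ((sqrtDegMatrix G).mulVecLin ∘ₗ cutFunction S) (by simp)
  have hcut : hL.eigenvalues (σ ⟨1, hn⟩) * ∑ v, (G.degree v : ℝ) * cutFunction S c v ^ 2 ≤
      cutFunction S c ⬝ᵥ G.lapMatrix ℝ *ᵥ cutFunction S c := by
    simpa only [star_trivial, RCLike.re_to_real, LinearMap.comp_apply, mulVecLin_apply,
      sqrtDegMatrix_mulVec_dotProduct_self, sqrtDegMatrix_mulVec_dotProduct_mulVec,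
      sqrtDegMatrix_mul_normLapMatrix_mul_sqrtDegMatrix G hdeg] using hrayleigh
  have henergy := cutFunction_energy_le G hS_pos hS_compl c
  have hnorm_pos := sum_degree_mul_cutFunction_sq_pos G hS_pos (hS_pos.trans_le hS_compl) hc
  rw [filter_adj_mem_notMem_eq_interedges, div_le_iff₀' two_pos]
  exact le_of_mul_le_mul_right (hcut.trans henergy) hnorm_pos

/-- **Cheeger inequality (easy direction).**  For a finite simple connected graph on at
least two vertices with second smallest normalized-Laplacian eigenvalue `λ₂` (here `μ` is
a monotone enumeration of the eigenvalues, so `λ₂ = μ 1`), every nonempty vertex set `S`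
with `vol S ≤ vol V / 2` satisfies `λ₂ / 2 ≤ e(S, Sᶜ) / vol S`; that is,
`λ₂ / 2 ≤ h(G)`. -/
theorem cheeger_lower_bound {n : ℕ} (hn : 1 < n) (G : SimpleGraph (Fin n))
    [DecidableRel G.Adj] (hG : G.Connected)
    (hL : (normLapMatrix G).IsHermitian)
    (μ : Fin n → ℝ) (hmono : Monotone μ)
    (hperm : ∃ σ : Equiv.Perm (Fin n), hL.eigenvalues ∘ σ = μ)
    (S : Finset (Fin n)) (hS : S.Nonempty)
    (hvol : (∑ v ∈ S, (G.degree v : ℝ)) ≤ (∑ v : Fin n, (G.degree v : ℝ)) / 2) :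
    μ ⟨1, hn⟩ / 2 ≤
      ((Finset.univ.filter
          (fun p : Fin n × Fin n => G.Adj p.1 p.2 ∧ p.1 ∈ S ∧ p.2 ∉ S)).card : ℝ) /
        (∑ v ∈ S, (G.degree v : ℝ)) := by
  have : Nontrivial (Fin n) := Fin.nontrivial_iff_two_le.2 hn
  exact cheeger_lower_bound_general hn G (hG.preconnected.degree_pos_of_nontrivial ·) hL μ hmono
    hperm S hS hvol
end

section
/- Let $G$ be a finite simple connected graph with at least two vertices, let $\tilde{L} = I - D^{-1/2} A D^{-1/2}$ be its normalized Laplacian, and let $\lambda_2$ be the second smallest eigenvalue of $\tilde{L}$. Then $h(G) \le \sqrt{2 \lambda_2}$, where $h(G)$ is the Cheeger constant of $G$. -/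
open Finset

/-!
The span of two eigenvectors of the normalized Laplacian with eigenvalues at most `λ₂` contains a
nonzero vector orthogonal to `D^{1/2} 1`. Rescaled by `D^{-1/2}` it is a function `f` with
`∑ d f = 0` and Dirichlet energy at most `λ₂ ∑ d f ^ 2`. Subtracting a `d`-weighted median `c` does
not change the energy and only increases `∑ d f ^ 2`, and one of the two parts `(f - c)⁺`,
`(f - c)⁻` inherits the energy bound; both are supported on at most half the volume. Call it `h`.
If every nonempty subset of the support of `h` had ratio `e(S, Sᶜ) / vol S` at least `α`, then the
coarea formula for `h ^ 2` and Cauchy–Schwarz would give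
`α ∑ d h ^ 2 ≤ ∑ W (h u ^ 2 - h v ^ 2)⁺ ≤ √(2 λ₂) ∑ d h ^ 2`, so `α ≤ √(2 λ₂)`.
-/

section WeightedGraph

open Matrix MeasureTheory

variable {V : Type*} [Fintype V]

/-- The Dirichlet energy of a vertex function on the weighted graph with edge weights `W`; the
factor `1 / 2` compensates for each edge being counted in both directions. -/
noncomputable def dirichletEnergy (W : Matrix V V ℝ) (f : V → ℝ) : ℝ :=
  (∑ u, ∑ v, W u v * (f u - f v) ^ 2) / 2

variable {W : Matrix V V ℝ} {d : V → ℝ}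

theorem dirichletEnergy_nonneg (hW₀ : ∀ u v, 0 ≤ W u v) (f : V → ℝ) : 0 ≤ dirichletEnergy W f :=
  div_nonneg (sum_nonneg fun u _ => sum_nonneg fun v _ => mul_nonneg (hW₀ u v) (sq_nonneg _))
    zero_le_two

theorem dirichletEnergy_sub_const (W : Matrix V V ℝ) (f : V → ℝ) (c : ℝ) :
    dirichletEnergy W (fun u => f u - c) = dirichletEnergy W f := by
  simp only [dirichletEnergy, sub_sub_sub_cancel_right]

theorem sum_sum_mul_add_of_isSymm (hW : W.IsSymm) (hd : ∀ u, ∑ v, W u v = d u) (g : V → ℝ) :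
    ∑ u, ∑ v, W u v * (g u + g v) = 2 * ∑ u, d u * g u := by
  have out : ∑ u, ∑ v, W u v * g u = ∑ u, d u * g u := by simp only [← sum_mul, hd]
  have into : ∑ u, ∑ v, W u v * g v = ∑ u, d u * g u := by
    rw [sum_comm, ← out]
    simp only [hW.apply]
  simp only [mul_add, sum_add_distrib, out, into, two_mul]

theorem dirichletEnergy_eq_sub (hW : W.IsSymm) (hd : ∀ u, ∑ v, W u v = d u) (f : V → ℝ) :
    dirichletEnergy W f = ∑ u, d u * f u ^ 2 - f ⬝ᵥ W *ᵥ f := by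
  have expand : ∑ u, ∑ v, W u v * (f u - f v) ^ 2 =
      ∑ u, ∑ v, W u v * (f u ^ 2 + f v ^ 2) - 2 * (f ⬝ᵥ W *ᵥ f) := by
    simp only [dotProduct, mulVec, mul_sum, ← sum_sub_distrib]
    exact sum_congr rfl fun u _ => sum_congr rfl fun v _ => by ring
  rw [dirichletEnergy, expand, sum_sum_mul_add_of_isSymm hW hd fun u => f u ^ 2]
  ring

theorem sum_sum_mul_abs_sub_of_isSymm (hW : W.IsSymm) (g : V → ℝ) :
    ∑ u, ∑ v, W u v * |g u - g v| = 2 * ∑ u, ∑ v, W u v * (g u - g v)⁺ := by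
  have swap : ∑ u, ∑ v, W u v * (g v - g u)⁺ = ∑ u, ∑ v, W u v * (g u - g v)⁺ := by
    rw [sum_comm]
    simp only [hW.apply]
  have abs_eq (x y : ℝ) : |x - y| = (x - y)⁺ + (y - x)⁺ := by
    rw [← neg_sub x y, posPart_neg, posPart_add_negPart]
  simp only [abs_eq, mul_add, sum_add_distrib, swap, two_mul]

-- Cauchy–Schwarz applied to `|h u ^ 2 - h v ^ 2| = |h u - h v| * |h u + h v|`.
theorem sq_sum_sum_mul_posPart_sq_sub_sq_le (hW : W.IsSymm) (hW₀ : ∀ u v, 0 ≤ W u v)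
    (hd : ∀ u, ∑ v, W u v = d u) (h : V → ℝ) :
    (∑ u, ∑ v, W u v * (h u ^ 2 - h v ^ 2)⁺) ^ 2 ≤
      2 * dirichletEnergy W h * ∑ u, d u * h u ^ 2 := by
  have cauchy_schwarz : (∑ u, ∑ v, W u v * |h u ^ 2 - h v ^ 2|) ^ 2 ≤
      (∑ u, ∑ v, W u v * (h u - h v) ^ 2) * ∑ u, ∑ v, W u v * (h u + h v) ^ 2 := by
    simp only [← Fintype.sum_prod_type']
    refine sum_sq_le_sum_mul_sum_of_sq_le_mul _
      (fun p _ => mul_nonneg (hW₀ _ _) (sq_nonneg _))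
      (fun p _ => mul_nonneg (hW₀ _ _) (sq_nonneg _)) fun p _ => le_of_eq ?_
    rw [mul_pow, sq_abs]
    ring
  have sum_sq_le : ∑ u, ∑ v, W u v * (h u + h v) ^ 2 ≤ 4 * ∑ u, d u * h u ^ 2 := calc
    _ ≤ ∑ u, ∑ v, 2 * (W u v * (h u ^ 2 + h v ^ 2)) := by
      refine sum_le_sum fun u _ => sum_le_sum fun v _ => ?_
      rw [mul_left_comm]
      exact mul_le_mul_of_nonneg_left add_sq_le (hW₀ u v)
    _ = 4 * ∑ u, d u * h u ^ 2 := by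
      simp only [← mul_sum]
      rw [sum_sum_mul_add_of_isSymm hW hd fun u => h u ^ 2]
      ring
  rw [sum_sum_mul_abs_sub_of_isSymm hW fun u => h u ^ 2] at cauchy_schwarz
  have energy : ∑ u, ∑ v, W u v * (h u - h v) ^ 2 = 2 * dirichletEnergy W h := by
    rw [dirichletEnergy]
    ring
  rw [energy] at cauchy_schwarz
  linarith [mul_le_mul_of_nonneg_left sum_sq_le
    (mul_nonneg zero_le_two (dirichletEnergy_nonneg hW₀ h))]

theorem exists_weighted_median {α : Type*} [LinearOrder α] [Nonempty V] (hd₀ : ∀ u, 0 ≤ d u)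
    (f : V → α) :
    ∃ c, ∑ u with c < f u, d u ≤ (∑ u, d u) / 2 ∧ ∑ u with f u < c, d u ≤ (∑ u, d u) / 2 := by
  have half_nonneg : 0 ≤ (∑ u, d u) / 2 :=
    div_nonneg (sum_nonneg fun u _ => hd₀ u) zero_le_two
  let light : Finset V := {w | ∑ u with f w < f u, d u ≤ (∑ u, d u) / 2}
  have hlight : light.Nonempty := by
    obtain ⟨w, -, hw⟩ := exists_max_image univ f univ_nonempty
    refine ⟨w, ?_⟩
    simpa [light, fun u => (hw u (mem_univ u)).not_gt] using half_nonneg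
  obtain ⟨w, hw, hmin⟩ := light.exists_min_image f hlight
  refine ⟨f w, (mem_filter_univ w).1 hw, ?_⟩
  obtain hbelow | hbelow := ({u | f u < f w} : Finset V).eq_empty_or_nonempty
  · rwa [hbelow, sum_empty]
  obtain ⟨z, hz, hmax⟩ := exists_max_image _ f hbelow
  simp only [mem_filter_univ] at hz hmax
  have heavy : (∑ u, d u) / 2 < ∑ u with f z < f u, d u :=
    not_le.1 fun hz' => (hmin z ((mem_filter_univ z).2 hz')).not_gt hz
  have below_eq (u : V) : f u < f w ↔ ¬f z < f u :=
    ⟨fun hu => (hmax u hu).not_gt, fun hu => (not_lt.1 hu).trans_lt hz⟩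
  simp only [below_eq]
  linarith [sum_filter_add_sum_filter_not univ (fun u => f z < f u) d]

theorem sq_posPart_add_sq_negPart {R : Type*} [CommRing R] [LinearOrder R]
    [IsStrictOrderedRing R] (a : R) : a⁺ ^ 2 + a⁻ ^ 2 = a ^ 2 := by
  obtain ha | ha := le_total 0 a
  · simp [posPart_eq_self.2 ha, negPart_eq_zero.2 ha]
  · simp [posPart_eq_zero.2 ha, negPart_eq_neg.2 ha]

theorem sq_posPart_sub_add_sq_negPart_sub_le {R : Type*} [CommRing R] [LinearOrder R]
    [IsStrictOrderedRing R] (a b : R) :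
    (a⁺ - b⁺) ^ 2 + (a⁻ - b⁻) ^ 2 ≤ (a - b) ^ 2 := by
  obtain ha | ha := le_total 0 a <;> obtain hb | hb := le_total 0 b <;>
    simp only [posPart_eq_self.2, posPart_eq_zero.2, negPart_eq_neg.2, negPart_eq_zero.2, ha,
      hb] <;>
    nlinarith

theorem dirichletEnergy_posPart_add_negPart_le (hW₀ : ∀ u v, 0 ≤ W u v) (g : V → ℝ) :
    dirichletEnergy W g⁺ + dirichletEnergy W g⁻ ≤ dirichletEnergy W g := by
  simp only [dirichletEnergy, ← add_div, ← sum_add_distrib, ← mul_add]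
  gcongr with u _ v _
  · exact hW₀ u v
  · exact sq_posPart_sub_add_sq_negPart_sub_le (g u) (g v)

theorem dirichletEnergy_posPart_le_or_negPart_le (hW₀ : ∀ u v, 0 ≤ W u v) (hd₀ : ∀ u, 0 ≤ d u)
    {g : V → ℝ} {lam : ℝ} (hpos : 0 < ∑ u, d u * g u ^ 2)
    (hE : dirichletEnergy W g ≤ lam * ∑ u, d u * g u ^ 2) :
    (0 < ∑ u, d u * g⁺ u ^ 2 ∧ dirichletEnergy W g⁺ ≤ lam * ∑ u, d u * g⁺ u ^ 2) ∨
      (0 < ∑ u, d u * g⁻ u ^ 2 ∧ dirichletEnergy W g⁻ ≤ lam * ∑ u, d u * g⁻ u ^ 2) := by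
  have split : ∑ u, d u * g u ^ 2 = ∑ u, d u * g⁺ u ^ 2 + ∑ u, d u * g⁻ u ^ 2 := by
    simp only [← sum_add_distrib, ← mul_add, Pi.posPart_apply, Pi.negPart_apply,
      sq_posPart_add_sq_negPart]
  have energy := dirichletEnergy_posPart_add_negPart_le hW₀ g
  have norm_nonneg (h : V → ℝ) : 0 ≤ ∑ u, d u * h u ^ 2 :=
    sum_nonneg fun u _ => mul_nonneg (hd₀ u) (sq_nonneg _)
  rw [split] at hpos hE
  rw [mul_add] at hE
  obtain hp | hp := (norm_nonneg g⁺).eq_or_lt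
  · rw [← hp, zero_add] at hpos
    rw [← hp, mul_zero, zero_add] at hE
    exact Or.inr ⟨hpos, by linarith [dirichletEnergy_nonneg hW₀ g⁺]⟩
  obtain hn | hn := (norm_nonneg g⁻).eq_or_lt
  · rw [← hn, mul_zero, add_zero] at hE
    exact Or.inl ⟨hp, by linarith [dirichletEnergy_nonneg hW₀ g⁻]⟩
  obtain hle | hlt := le_or_gt (dirichletEnergy W g⁺) (lam * ∑ u, d u * g⁺ u ^ 2)
  · exact Or.inl ⟨hp, hle⟩
  · exact Or.inr ⟨hn, by linarith⟩

theorem sum_mul_sq_le_sum_mul_sub_sq (hd₀ : ∀ u, 0 ≤ d u) {f : V → ℝ}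
    (hf : ∑ u, d u * f u = 0) (c : ℝ) :
    ∑ u, d u * f u ^ 2 ≤ ∑ u, d u * (f u - c) ^ 2 := by
  have expand : ∑ u, d u * (f u - c) ^ 2 =
      ∑ u, d u * f u ^ 2 - 2 * c * ∑ u, d u * f u + c ^ 2 * ∑ u, d u := by
    simp only [mul_sum, ← sum_sub_distrib, ← sum_add_distrib]
    exact sum_congr rfl fun u _ => by ring
  rw [expand, hf]
  have := mul_nonneg (sq_nonneg c) (sum_nonneg fun u (_ : u ∈ univ) => hd₀ u)
  linarith

theorem dotProduct_self_of_eq_sqrt_mul (hd₀ : ∀ u, 0 ≤ d u) {f z : V → ℝ}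
    (hz : ∀ u, z u = √(d u) * f u) : z ⬝ᵥ z = ∑ u, d u * f u ^ 2 :=
  sum_congr rfl fun u _ => by rw [hz, mul_mul_mul_comm, Real.mul_self_sqrt (hd₀ u), sq]

variable [DecidableEq V]

/-- The total weight of the edges leaving `S`. -/
def cutWeight (W : Matrix V V ℝ) (S : Finset V) : ℝ :=
  ∑ u ∈ S, ∑ v ∈ Sᶜ, W u v

-- Integrate the hypothesis over `t`: this is the layer-cake formula on the left and the coarea
-- formula on the right.
theorem mul_sum_mul_le_of_superlevel_cutWeight {F : V → ℝ} (hF : ∀ u, 0 ≤ F u) {α : ℝ}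
    (hcut : ∀ t, 0 ≤ t → α * ∑ u with t < F u, d u ≤ cutWeight W {u | t < F u}) :
    α * ∑ u, d u * F u ≤ ∑ u, ∑ v, W u v * (F u - F v)⁺ := by
  have integrable_layer (a b w : ℝ) : Integrable ((Set.Ico a b).indicator fun _ => w) :=
    (integrable_indicator_iff measurableSet_Ico).2 (integrableOn_const (by simp))
  have integral_layer (a b w : ℝ) :
      ∫ t, (Set.Ico a b).indicator (fun _ => w) t = w * (b - a)⁺ := by
    rw [integral_indicator_const w measurableSet_Ico, Real.volume_real_Ico, smul_eq_mul, mul_comm,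
      posPart_def]
  have layerwise (t : ℝ) : ∑ u, (Set.Ico 0 (F u)).indicator (fun _ => α * d u) t ≤
      ∑ u, ∑ v, (Set.Ico (F v) (F u)).indicator (fun _ => W u v) t := by
    obtain ht | ht := le_or_gt 0 t
    · have mem_layer (u v : V) : t ∈ Set.Ico (F v) (F u) ↔ t < F u ∧ F v ≤ t := and_comm
      have hcut_t := hcut t ht
      simp only [cutWeight, compl_filter, not_lt, sum_filter, mul_sum, mul_ite, mul_zero] at hcut_t
      simpa only [Set.indicator_apply, mem_layer, Set.mem_Ico, ht, true_and, ite_and,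
        sum_ite_irrel, sum_const_zero] using hcut_t
    · have outside (u : V) : t ∉ Set.Ico 0 (F u) := fun h => h.1.not_gt ht
      have below (u v : V) : t ∉ Set.Ico (F v) (F u) := fun h => (h.1.trans_lt ht).not_ge (hF v)
      simp only [outside, below, not_false_eq_true, Set.indicator_of_notMem, sum_const_zero,
        le_refl]
  have integrated := integral_mono
    (integrable_finsetSum _ fun u _ => integrable_layer 0 (F u) (α * d u))
    (integrable_finsetSum _ fun u _ => integrable_finsetSum _ fun v _ =>
      integrable_layer (F v) (F u) (W u v)) layerwise
  simp only [integral_finsetSum, integrable_layer, integrable_finsetSum, implies_true,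
    integral_layer, sub_zero, posPart_eq_self.2 (hF _), mul_assoc, ← mul_sum] at integrated
  exact integrated

theorem exists_cutWeight_div_le_sqrt_of_dirichletEnergy_le (hW : W.IsSymm) (hW₀ : ∀ u v, 0 ≤ W u v)
    (hd : ∀ u, ∑ v, W u v = d u) (hd₀ : ∀ u, 0 < d u) {h : V → ℝ} {lam : ℝ}
    (hpos : 0 < ∑ u, d u * h u ^ 2)
    (hE : dirichletEnergy W h ≤ lam * ∑ u, d u * h u ^ 2) :
    ∃ S : Finset V, S.Nonempty ∧ (∀ u ∈ S, h u ≠ 0) ∧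
      cutWeight W S / ∑ u ∈ S, d u ≤ √(2 * lam) := by
  let supported : Finset (Finset V) := {S | S.Nonempty ∧ ∀ u ∈ S, h u ≠ 0}
  have hsupported : supported.Nonempty := by
    obtain ⟨u, -, hu⟩ := exists_lt_of_sum_lt (f := fun _ => (0 : ℝ)) (by simpa using hpos)
    have hu₀ : h u ≠ 0 := fun hu₀ => by simp [hu₀] at hu
    exact ⟨{u}, by simpa [supported] using hu₀⟩
  obtain ⟨S, hS, hmin⟩ :=
    supported.exists_min_image (fun S => cutWeight W S / ∑ u ∈ S, d u) hsupported
  simp only [supported, mem_filter_univ] at hS hmin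
  refine ⟨S, hS.1, hS.2, ?_⟩
  set α := cutWeight W S / ∑ u ∈ S, d u
  set N := ∑ u, d u * h u ^ 2
  have hα : 0 ≤ α := div_nonneg (sum_nonneg fun u _ => sum_nonneg fun v _ => hW₀ u v)
    (sum_nonneg fun u _ => (hd₀ u).le)
  have α_mul_le : α * N ≤ ∑ u, ∑ v, W u v * (h u ^ 2 - h v ^ 2)⁺ := by
    refine mul_sum_mul_le_of_superlevel_cutWeight (fun u => sq_nonneg (h u)) fun t ht => ?_
    obtain hT | hT := ({u | t < h u ^ 2} : Finset V).eq_empty_or_nonempty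
    · simp [hT, cutWeight]
    · refine (le_div_iff₀ (sum_pos (fun u _ => hd₀ u) hT)).1 (hmin _ ⟨hT, fun u hu => ?_⟩)
      exact sq_pos_iff.1 (ht.trans_lt ((mem_filter_univ u).1 hu))
  refine Real.le_sqrt_of_sq_le (le_of_mul_le_mul_right ?_ (pow_pos hpos 2))
  calc
    α ^ 2 * N ^ 2 = (α * N) ^ 2 := (mul_pow _ _ _).symm
    _ ≤ (∑ u, ∑ v, W u v * (h u ^ 2 - h v ^ 2)⁺) ^ 2 :=
      pow_le_pow_left₀ (mul_nonneg hα hpos.le) α_mul_le 2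
    _ ≤ 2 * dirichletEnergy W h * N := sq_sum_sum_mul_posPart_sq_sub_sq_le hW hW₀ hd h
    _ ≤ 2 * (lam * N) * N := by gcongr
    _ = 2 * lam * N ^ 2 := by ring

theorem exists_cutWeight_div_le_sqrt_of_sum_eq_zero (hW : W.IsSymm) (hW₀ : ∀ u v, 0 ≤ W u v)
    (hd : ∀ u, ∑ v, W u v = d u) (hd₀ : ∀ u, 0 < d u) {f : V → ℝ} {lam : ℝ}
    (hf : ∑ u, d u * f u = 0) (hpos : 0 < ∑ u, d u * f u ^ 2)
    (hE : dirichletEnergy W f ≤ lam * ∑ u, d u * f u ^ 2) :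
    ∃ S : Finset V, S.Nonempty ∧ ∑ u ∈ S, d u ≤ (∑ u, d u) / 2 ∧
      cutWeight W S / ∑ u ∈ S, d u ≤ √(2 * lam) := by
  have hd₀' (u : V) : 0 ≤ d u := (hd₀ u).le
  have hlam : 0 ≤ lam := nonneg_of_mul_nonneg_left ((dirichletEnergy_nonneg hW₀ f).trans hE) hpos
  have : Nonempty V := by
    by_contra hV
    simp [not_nonempty_iff.1 hV] at hpos
  obtain ⟨c, hc_above, hc_below⟩ := exists_weighted_median hd₀' f
  let g : V → ℝ := fun u => f u - c
  have norm_le : ∑ u, d u * f u ^ 2 ≤ ∑ u, d u * g u ^ 2 := sum_mul_sq_le_sum_mul_sub_sq hd₀' hf c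
  have hEg : dirichletEnergy W g ≤ lam * ∑ u, d u * g u ^ 2 := by
    rw [dirichletEnergy_sub_const]
    exact hE.trans (mul_le_mul_of_nonneg_left norm_le hlam)
  have sweep (h : V → ℝ) (hvol : ∑ u with h u ≠ 0, d u ≤ (∑ u, d u) / 2)
      (hR : 0 < ∑ u, d u * h u ^ 2 ∧ dirichletEnergy W h ≤ lam * ∑ u, d u * h u ^ 2) :
      ∃ S : Finset V, S.Nonempty ∧ ∑ u ∈ S, d u ≤ (∑ u, d u) / 2 ∧
        cutWeight W S / ∑ u ∈ S, d u ≤ √(2 * lam) := by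
    obtain ⟨S, hS, hSsupp, hcut⟩ :=
      exists_cutWeight_div_le_sqrt_of_dirichletEnergy_le hW hW₀ hd hd₀ hR.1 hR.2
    have hsub : S ⊆ univ.filter fun u => h u ≠ 0 := fun u hu => (mem_filter_univ u).2 (hSsupp u hu)
    exact ⟨S, hS, (sum_le_sum_of_subset_of_nonneg hsub fun u _ _ => hd₀' u).trans hvol, hcut⟩
  obtain hR | hR := dirichletEnergy_posPart_le_or_negPart_le hW₀ hd₀' (hpos.trans_le norm_le) hEg
  · exact sweep g⁺ (by simpa [g] using hc_above) hR
  · exact sweep g⁻ (by simpa [g] using hc_below) hR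

-- The span of two eigenvectors is a plane, so it meets the hyperplane orthogonal to `s`.
theorem exists_dotProduct_eq_zero_and_dotProduct_mulVec_le {A : Matrix V V ℝ} (hA : A.IsHermitian)
    {i j : V} (hij : i ≠ j) {lam : ℝ} (hi : hA.eigenvalues i ≤ lam) (hj : hA.eigenvalues j ≤ lam)
    (s : V → ℝ) : ∃ z ≠ 0, s ⬝ᵥ z = 0 ∧ z ⬝ᵥ A *ᵥ z ≤ lam * (z ⬝ᵥ z) := by
  let e (k : V) : V → ℝ := hA.eigenvectorBasis k
  have dot_e (k l : V) : e k ⬝ᵥ e l = if k = l then 1 else 0 := by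
    rw [dotProduct_comm]
    simpa [EuclideanSpace.inner_eq_star_dotProduct] using
      orthonormal_iff_ite.1 hA.eigenvectorBasis.orthonormal k l
  have mulVec_e (k : V) : A *ᵥ e k = hA.eigenvalues k • e k := hA.mulVec_eigenvectorBasis k
  obtain ⟨a, b, hab, horth⟩ : ∃ a b : ℝ, 0 < a ^ 2 + b ^ 2 ∧
      a * (s ⬝ᵥ e i) + b * (s ⬝ᵥ e j) = 0 := by
    by_cases h : s ⬝ᵥ e i = 0
    · exact ⟨1, 0, by norm_num, by rw [h]; ring⟩
    · exact ⟨-(s ⬝ᵥ e j), s ⬝ᵥ e i, by positivity, by ring⟩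
  let z : V → ℝ := a • e i + b • e j
  have dot_z : z ⬝ᵥ z = a ^ 2 + b ^ 2 := by
    simp only [z, dotProduct_add, dotProduct_smul, add_dotProduct, smul_dotProduct, dot_e,
      reduceIte, smul_eq_mul, mul_one, hij, hij.symm, mul_zero, add_zero, zero_add]
    ring
  have quadratic_form : z ⬝ᵥ A *ᵥ z = a ^ 2 * hA.eigenvalues i + b ^ 2 * hA.eigenvalues j := by
    simp only [z, mulVec_add, mulVec_smul, mulVec_e, dotProduct_add, dotProduct_smul,
      add_dotProduct, smul_dotProduct, dot_e, reduceIte, smul_eq_mul, mul_one, hij, hij.symm,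
      mul_zero, add_zero, zero_add]
    ring
  refine ⟨z, fun hz => hab.ne ?_, by simpa [z] using horth, ?_⟩
  · rw [← dot_z, hz, zero_dotProduct]
  · rw [quadratic_form, dot_z, mul_comm lam, add_mul]
    gcongr

/-- The normalized Laplacian `I - D^{-1/2} W D^{-1/2}` of the weighted graph with edge weights `W`
and vertex degrees `d`. The degrees are a separate argument, to be related to the row sums of `W`
by a hypothesis, so that `SimpleGraph.degree` can be used for them. -/
noncomputable def weightedNormLapMatrix (W : Matrix V V ℝ) (d : V → ℝ) : Matrix V V ℝ :=
  1 - diagonal (fun v => (√(d v))⁻¹) * W * diagonal (fun v => (√(d v))⁻¹)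

theorem dotProduct_weightedNormLapMatrix_mulVec (hW : W.IsSymm) (hd : ∀ u, ∑ v, W u v = d u)
    (hd₀ : ∀ u, 0 < d u) {f z : V → ℝ} (hz : ∀ u, z u = √(d u) * f u) :
    z ⬝ᵥ weightedNormLapMatrix W d *ᵥ z = dirichletEnergy W f := by
  have sqrt_ne (u : V) : √(d u) ≠ 0 := (Real.sqrt_pos.2 (hd₀ u)).ne'
  have scale_z : diagonal (fun v => (√(d v))⁻¹) *ᵥ z = f := by
    ext u
    rw [mulVec_diagonal, hz, inv_mul_cancel_left₀ (sqrt_ne u)]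
  have z_scale : z ᵥ* diagonal (fun v => (√(d v))⁻¹) = f := by
    rw [← mulVec_transpose, diagonal_transpose, scale_z]
  rw [weightedNormLapMatrix, sub_mulVec, one_mulVec, dotProduct_sub, ← mulVec_mulVec,
    ← mulVec_mulVec, scale_z, dotProduct_mulVec, z_scale,
    dotProduct_self_of_eq_sqrt_mul (fun u => (hd₀ u).le) hz, dirichletEnergy_eq_sub hW hd]

theorem exists_dirichletEnergy_le_of_eigenvalues_le (hW : W.IsSymm) (hd : ∀ u, ∑ v, W u v = d u)
    (hd₀ : ∀ u, 0 < d u) (hL : (weightedNormLapMatrix W d).IsHermitian) {i j : V} (hij : i ≠ j)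
    {lam : ℝ} (hi : hL.eigenvalues i ≤ lam) (hj : hL.eigenvalues j ≤ lam) :
    ∃ f : V → ℝ, ∑ u, d u * f u = 0 ∧ 0 < ∑ u, d u * f u ^ 2 ∧
      dirichletEnergy W f ≤ lam * ∑ u, d u * f u ^ 2 := by
  obtain ⟨z, hz, horth, hquad⟩ :=
    exists_dotProduct_eq_zero_and_dotProduct_mulVec_le hL hij hi hj fun u => √(d u)
  let f : V → ℝ := fun u => z u / √(d u)
  have hzf (u : V) : z u = √(d u) * f u := (mul_div_cancel₀ _ (Real.sqrt_pos.2 (hd₀ u)).ne').symm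
  have dot_z : z ⬝ᵥ z = ∑ u, d u * f u ^ 2 :=
    dotProduct_self_of_eq_sqrt_mul (fun u => (hd₀ u).le) hzf
  refine ⟨f, ?_, ?_, ?_⟩
  · rw [← horth]
    exact sum_congr rfl fun u _ => by rw [hzf, ← mul_assoc, Real.mul_self_sqrt (hd₀ u).le]
  · rw [← dot_z]
    simpa using dotProduct_star_self_pos_iff.2 hz
  · rwa [← dotProduct_weightedNormLapMatrix_mulVec hW hd hd₀ hzf, ← dot_z]

end WeightedGraph

theorem cheeger_upper_bound_general {V : Type*} [Fintype V] [DecidableEq V] {n : ℕ} (hn : 1 < n)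
    {W : Matrix V V ℝ} {d : V → ℝ} (hW : W.IsSymm) (hW₀ : ∀ u v, 0 ≤ W u v)
    (hd : ∀ u, ∑ v, W u v = d u) (hd₀ : ∀ u, 0 < d u)
    (hL : (weightedNormLapMatrix W d).IsHermitian) (μ : Fin n → ℝ) (hmono : Monotone μ)
    (hequiv : ∃ σ : Fin n ≃ V, hL.eigenvalues ∘ σ = μ) :
    ∃ S : Finset V, S.Nonempty ∧ ∑ v ∈ S, d v ≤ (∑ v, d v) / 2 ∧
      cutWeight W S / ∑ v ∈ S, d v ≤ √(2 * μ ⟨1, hn⟩) := by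
  obtain ⟨σ, rfl⟩ := hequiv
  have first_ne_second : σ ⟨0, zero_lt_one.trans hn⟩ ≠ σ ⟨1, hn⟩ := σ.injective.ne (by simp)
  obtain ⟨f, hf, hpos, hE⟩ := exists_dirichletEnergy_le_of_eigenvalues_le hW hd hd₀ hL
    first_ne_second (hmono (by simp)) le_rfl
  exact exists_cutWeight_div_le_sqrt_of_sum_eq_zero hW hW₀ hd hd₀ hf hpos hE

section UnweightedGraph

variable {V : Type*} (G : SimpleGraph V) [DecidableRel G.Adj]

theorem adjMatrix_apply_nonneg (u v : V) : 0 ≤ G.adjMatrix ℝ u v := by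
  rw [SimpleGraph.adjMatrix_apply]
  positivity

theorem sum_adjMatrix_apply [Fintype V] (u : V) : ∑ v, G.adjMatrix ℝ u v = G.degree u := by
  simp only [SimpleGraph.adjMatrix_apply, G.degree_eq_sum_if_adj]

theorem card_filter_adj_eq_cutWeight_adjMatrix [Fintype V] [DecidableEq V] (S : Finset V) :
    ((univ.filter fun p : V × V => G.Adj p.1 p.2 ∧ p.1 ∈ S ∧ p.2 ∉ S).card : ℝ) =
      cutWeight (G.adjMatrix ℝ) S := by
  simp only [cutWeight, SimpleGraph.adjMatrix_apply]
  rw [← sum_product', sum_boole]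
  congr 2
  ext p
  simp [and_comm]

end UnweightedGraph

/-- **Cheeger inequality (hard direction).**  For a finite simple connected graph on at
least two vertices with second smallest normalized-Laplacian eigenvalue `λ₂` (here `μ` is
a monotone enumeration of the eigenvalues, so `λ₂ = μ 1`), there is a nonempty vertex set
`S` with `vol S ≤ vol V / 2` and `e(S, Sᶜ) / vol S ≤ √(2 λ₂)`; that is,
`h(G) ≤ √(2 λ₂)`. -/
theorem cheeger_upper_bound {n : ℕ} (hn : 1 < n) (G : SimpleGraph (Fin n))
    [DecidableRel G.Adj] (hG : G.Connected)
    (hL : (normLapMatrix G).IsHermitian)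
    (μ : Fin n → ℝ) (hmono : Monotone μ)
    (hperm : ∃ σ : Equiv.Perm (Fin n), hL.eigenvalues ∘ σ = μ) :
    ∃ S : Finset (Fin n), S.Nonempty ∧
      (∑ v ∈ S, (G.degree v : ℝ)) ≤ (∑ v : Fin n, (G.degree v : ℝ)) / 2 ∧
      ((Finset.univ.filter
          (fun p : Fin n × Fin n => G.Adj p.1 p.2 ∧ p.1 ∈ S ∧ p.2 ∉ S)).card : ℝ) /
        (∑ v ∈ S, (G.degree v : ℝ)) ≤ Real.sqrt (2 * μ ⟨1, hn⟩) := by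
  have : Nontrivial (Fin n) := Fin.nontrivial_iff_two_le.2 hn
  simpa only [card_filter_adj_eq_cutWeight_adjMatrix] using cheeger_upper_bound_general hn
    G.isSymm_adjMatrix (adjMatrix_apply_nonneg G) (sum_adjMatrix_apply G)
    (fun v => Nat.cast_pos.2 (hG.preconnected.degree_pos_of_nontrivial v)) hL μ hmono hperm
end

section
/- Let $G$ be a finite simple connected graph on $n \ge 2$ vertices with diameter $D$ (the maximum over all vertex pairs of the graph distance), and let $\lambda_2$ be the second smallest eigenvalue of the combinatorial Laplacian $L = \mathrm{Deg} - A$. Then $\lambda_2 \ge \frac{4}{nD}$. -/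
/-!
Let `n` be the number of vertices and `D` the diameter. Telescoping along a geodesic from `u` to `v`
and Cauchy–Schwarz bound `(f u - f v) ^ 2` by `D` times the sum of `(f a - f b) ^ 2` over the
directed edges `(a, b)` of the geodesic. For each of them `u` is strictly closer to `a` than to `b`,
and `v` strictly closer to `b` than to `a`. The vertices closer to `a` and those closer to `b` form
disjoint sets, so `(a, b)` serves at most `n ^ 2 / 4` ordered pairs `(u, v)`. Summing over all pairs
gives the Poincaré inequality `4 ‖f‖ ^ 2 ≤ n D ⟪f, L f⟫` for `f` of mean zero. As in the
Courant–Fischer principle, the span of two orthogonal eigenvectors contains a nonzero vector of mean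
zero, so the larger of their eigenvalues is at least `4 / (n D)`.
-/

open Finset Matrix
open scoped InnerProductSpace

section TwoEigenvalues

variable {𝕜 E ι : Type*} [RCLike 𝕜]

theorem exists_smul_add_smul_mem_ker {K M : Type*} [Field K] [AddCommGroup M] [Module K M]
    (φ : M →ₗ[K] K) (x y : M) :
    ∃ a b : K, (a ≠ 0 ∨ b ≠ 0) ∧ a • x + b • y ∈ φ.ker := by
  by_cases hy : φ y = 0
  · exact ⟨0, 1, .inr one_ne_zero, by simpa using hy⟩
  · exact ⟨φ y, -φ x, .inl hy, by simp [mul_comm]⟩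

theorem le_max_of_forall_mem_ker_mul_norm_sq_le [NormedAddCommGroup E] [InnerProductSpace 𝕜 E]
    (T : E →ₗ[𝕜] E) (φ : E →ₗ[𝕜] 𝕜) {c α β : ℝ} {x y : E}
    (hT : ∀ z ∈ φ.ker, c * ‖z‖ ^ 2 ≤ RCLike.re ⟪z, T z⟫_𝕜)
    (hx : ‖x‖ = 1) (hy : ‖y‖ = 1) (hxy : ⟪x, y⟫_𝕜 = 0)
    (hTx : T x = (α : 𝕜) • x) (hTy : T y = (β : 𝕜) • y) :
    c ≤ max α β := by
  obtain ⟨a, b, hab, hker⟩ := exists_smul_add_smul_mem_ker φ x y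
  have hyx : ⟪y, x⟫_𝕜 = 0 := inner_eq_zero_symm.1 hxy
  have norm_sq_eq : ‖a • x + b • y‖ ^ 2 = ‖a‖ ^ 2 + ‖b‖ ^ 2 := by
    rw [norm_add_sq (𝕜 := 𝕜)]
    simp [norm_smul, inner_smul_left, inner_smul_right, hx, hy, hxy]
  have inner_eq :
      ⟪a • x + b • y, T (a • x + b • y)⟫_𝕜 = ((‖a‖ ^ 2 * α + ‖b‖ ^ 2 * β : ℝ) : 𝕜) := by
    simp only [map_add, map_smul, map_mul, map_pow, hTx, hTy, inner_add_left, inner_add_right,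
      inner_smul_left, inner_smul_right, inner_self_eq_norm_sq_to_K, hx, hy, hxy, hyx, map_one,
      one_pow, mul_one, mul_zero, add_zero, zero_add, ← RCLike.conj_mul]
    ring
  have norm_sq_pos : 0 < ‖a‖ ^ 2 + ‖b‖ ^ 2 := by
    rcases hab with ha | hb <;> positivity
  refine le_of_mul_le_mul_right ?_ norm_sq_pos
  calc c * (‖a‖ ^ 2 + ‖b‖ ^ 2) ≤ ‖a‖ ^ 2 * α + ‖b‖ ^ 2 * β := by
        simpa only [norm_sq_eq, inner_eq, RCLike.ofReal_re] using hT _ hker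
    _ ≤ ‖a‖ ^ 2 * max α β + ‖b‖ ^ 2 * max α β := by
        gcongr
        exacts [le_max_left α β, le_max_right α β]
    _ = max α β * (‖a‖ ^ 2 + ‖b‖ ^ 2) := by ring

theorem le_max_eigenvalues_of_forall_mem_ker [Fintype ι] [DecidableEq ι] {A : Matrix ι ι 𝕜}
    (hA : A.IsHermitian) (φ : (ι → 𝕜) →ₗ[𝕜] 𝕜) {c : ℝ}
    (hφ : ∀ f ∈ φ.ker, c * RCLike.re (star f ⬝ᵥ f) ≤ RCLike.re (star f ⬝ᵥ A *ᵥ f))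
    {i j : ι} (hij : i ≠ j) :
    c ≤ max (hA.eigenvalues i) (hA.eigenvalues j) := by
  let e := hA.eigenvectorBasis
  have apply_eigenvector (k : ι) : toLpLin 2 2 A (e k) = (hA.eigenvalues k : 𝕜) • e k := by
    rw [toLpLin_apply, hA.mulVec_eigenvectorBasis, RCLike.real_smul_eq_coe_smul (K := 𝕜)]
    rfl
  refine le_max_of_forall_mem_ker_mul_norm_sq_le (toLpLin 2 2 A)
    (φ ∘ₗ (WithLp.linearEquiv 2 𝕜 (ι → 𝕜)).toLinearMap) (fun z hz ↦ ?_)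
    (e.norm_eq_one i) (e.norm_eq_one j) (e.inner_eq_zero hij)
    (apply_eigenvector i) (apply_eigenvector j)
  rw [← inner_self_eq_norm_sq (𝕜 := 𝕜)]
  simpa only [EuclideanSpace.inner_eq_star_dotProduct, dotProduct_comm _ (star z.ofLp),
    ofLp_toLpLin, toLin'_apply] using hφ z.ofLp hz

end TwoEigenvalues

theorem sum_sum_sq_sub {ι R : Type*} [Fintype ι] [CommRing R] (f : ι → R) :
    ∑ i, ∑ j, (f i - f j) ^ 2 = 2 * (Fintype.card ι * (f ⬝ᵥ f) - (∑ i, f i) ^ 2) := by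
  simp only [sub_sq, sum_add_distrib, sum_sub_distrib, ← mul_sum, ← sum_mul, sum_const, card_univ,
    nsmul_eq_mul, dotProduct, ← sq]
  ring

theorem four_mul_card_mul_card_le_sq_of_disjoint {ι : Type*} [Fintype ι] {s t : Finset ι}
    (h : Disjoint s t) :
    4 * #s * #t ≤ Fintype.card ι ^ 2 := by
  classical
  calc 4 * #s * #t ≤ (#s + #t) ^ 2 := four_mul_le_sq_add _ _
    _ = #(s ∪ t) ^ 2 := by rw [card_union_of_disjoint h]
    _ ≤ Fintype.card ι ^ 2 := Nat.pow_le_pow_left (card_le_univ _) 2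

section Geodesics

variable {V : Type*} {G : SimpleGraph V} {u v : V}

theorem sum_darts_sub {A : Type*} [AddCommGroup A] (f : V → A) (p : G.Walk u v) :
    (p.darts.map fun d ↦ f d.fst - f d.snd).sum = f u - f v := by
  induction p with
  | nil => simp
  | cons h p ih => simp [ih]

theorem sq_sub_le_length_mul_sum_darts [DecidableEq V] {R : Type*} [CommRing R] [LinearOrder R]
    [IsStrictOrderedRing R] (f : V → R) {p : G.Walk u v} (hp : p.IsPath) :
    (f u - f v) ^ 2 ≤ p.length * ∑ d ∈ p.darts.toFinset, (f d.fst - f d.snd) ^ 2 := by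
  have hnodup : p.darts.Nodup := SimpleGraph.Walk.darts_nodup_of_support_nodup hp.support_nodup
  rw [← sum_darts_sub f p, ← List.sum_toFinset _ hnodup, ← p.length_darts,
    ← List.toFinset_card_of_nodup hnodup]
  exact sq_sum_le_card_mul_sum_sq

theorem dist_getVert_of_length_eq_dist {p : G.Walk u v} (hp : p.length = G.dist u v) {i : ℕ}
    (hi : i ≤ p.length) : G.dist u (p.getVert i) = i := by
  rw [← SimpleGraph.length_eq_dist_of_subwalk hp (p.isSubwalk_take i),
    p.take_length, min_eq_left hi]

theorem dist_start_fst_lt_dist_start_snd {p : G.Walk u v} (hp : p.length = G.dist u v)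
    {d : G.Dart} (hd : d ∈ p.darts) : G.dist u d.fst < G.dist u d.snd := by
  obtain ⟨i, hi, rfl⟩ := List.getElem_of_mem hd
  rw [p.length_darts] at hi
  simp [SimpleGraph.Walk.darts_getElem_eq_getVert, dist_getVert_of_length_eq_dist hp hi,
    dist_getVert_of_length_eq_dist hp hi.le]

theorem dist_end_snd_lt_dist_end_fst {p : G.Walk u v} (hp : p.length = G.dist u v)
    {d : G.Dart} (hd : d ∈ p.darts) : G.dist v d.snd < G.dist v d.fst := by
  have hp' : p.reverse.length = G.dist v u := by
    rw [p.length_reverse, hp, G.dist_comm]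
  have hd' : d.symm ∈ p.reverse.darts := by
    simpa [SimpleGraph.Walk.mem_darts_reverse] using hd
  exact dist_start_fst_lt_dist_start_snd hp' hd'

end Geodesics

section Poincare

variable {V : Type*} [Fintype V] (G : SimpleGraph V)

/-- The vertices of `G` strictly closer to `a` than to `b`. For adjacent `a` and `b`, these are the
vertices from which a geodesic can traverse the edge `ab` in the direction from `a` to `b`. -/
noncomputable def closerVertices (a b : V) : Finset V :=
  {w | G.dist w a < G.dist w b}

theorem mem_closerVertices {a b w : V} :
    w ∈ closerVertices G a b ↔ G.dist w a < G.dist w b := by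
  simp [closerVertices]

theorem disjoint_closerVertices (a b : V) :
    Disjoint (closerVertices G a b) (closerVertices G b a) := by
  simp only [Finset.disjoint_left, mem_closerVertices]
  exact fun _ ↦ lt_asymm

variable [DecidableRel G.Adj]

theorem sum_darts_eq_sum_sum_ite {M : Type*} [AddCommMonoid M] (F : V → V → M) :
    ∑ d : G.Dart, F d.fst d.snd = ∑ u, ∑ v, if G.Adj u v then F u v else 0 := by
  rw [← Fintype.sum_prod_type' (f := fun u v ↦ if G.Adj u v then F u v else 0), ← sum_filter]
  exact sum_bij (fun d _ ↦ d.toProd) (fun d _ ↦ by simp [d.adj])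
    (fun _ _ _ _ h ↦ SimpleGraph.Dart.toProd_injective h)
    (fun e he ↦ ⟨⟨e, by simpa using he⟩, mem_univ _, rfl⟩) (fun _ _ ↦ rfl)

theorem two_mul_dotProduct_lapMatrix_mulVec [DecidableEq V] {R : Type*} [Field R] [CharZero R]
    (f : V → R) :
    2 * (f ⬝ᵥ G.lapMatrix R *ᵥ f) = ∑ d : G.Dart, (f d.fst - f d.snd) ^ 2 := by
  rw [← toLinearMap₂'_apply', G.lapMatrix_toLinearMap₂' R,
    sum_darts_eq_sum_sum_ite G fun u v ↦ (f u - f v) ^ 2, mul_div_cancel₀ _ two_ne_zero]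

variable {G} {R : Type*} {D : ℕ}

theorem sq_sub_le_dist_mul_sum_darts [DecidableEq V] [CommRing R] [LinearOrder R]
    [IsStrictOrderedRing R] {u v : V} (huv : G.Reachable u v) (f : V → R) :
    (f u - f v) ^ 2 ≤ G.dist u v * ∑ d : G.Dart with
      u ∈ closerVertices G d.fst d.snd ∧ v ∈ closerVertices G d.snd d.fst,
        (f d.fst - f d.snd) ^ 2 := by
  obtain ⟨p, hp⟩ := huv.exists_walk_length_eq_dist
  calc (f u - f v) ^ 2
      ≤ p.length * ∑ d ∈ p.darts.toFinset, (f d.fst - f d.snd) ^ 2 :=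
        sq_sub_le_length_mul_sum_darts f (p.isPath_of_length_eq_dist hp)
    _ ≤ _ := by
      rw [hp]
      gcongr
      intro d hd
      rw [List.mem_toFinset] at hd
      simp only [mem_filter_univ, mem_closerVertices]
      exact ⟨dist_start_fst_lt_dist_start_snd hp hd, dist_end_snd_lt_dist_end_fst hp hd⟩

theorem sum_sum_sq_sub_le_mul_sum_darts [CommRing R] [LinearOrder R] [IsStrictOrderedRing R]
    (hG : G.Connected) (hD : ∀ u v, G.dist u v ≤ D) (f : V → R) :
    ∑ u, ∑ v, (f u - f v) ^ 2 ≤ D * ∑ d : G.Dart,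
      #(closerVertices G d.fst d.snd) * #(closerVertices G d.snd d.fst) *
        (f d.fst - f d.snd) ^ 2 := by
  classical
  let W (d : G.Dart) : Finset (V × V) :=
    closerVertices G d.fst d.snd ×ˢ closerVertices G d.snd d.fst
  calc ∑ u, ∑ v, (f u - f v) ^ 2
      = ∑ e : V × V, (f e.1 - f e.2) ^ 2 := (Fintype.sum_prod_type' _).symm
    _ ≤ ∑ e : V × V, D * ∑ d : G.Dart with e ∈ W d, (f d.fst - f d.snd) ^ 2 := by
        gcongr with e
        simp only [W, mem_product]
        refine (sq_sub_le_dist_mul_sum_darts (hG e.1 e.2) f).trans ?_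
        gcongr
        exact hD e.1 e.2
    _ = D * ∑ d : G.Dart, ∑ e ∈ W d, (f d.fst - f d.snd) ^ 2 := by
        rw [← mul_sum, sum_comm' (t' := univ) (s' := W) (by simp)]
    _ = _ := by simp [W, card_product]

theorem four_mul_dotProduct_self_le_mul_dotProduct_lapMatrix_mulVec [DecidableEq V]
    [Field R] [LinearOrder R] [IsStrictOrderedRing R]
    (hG : G.Connected) (hD : ∀ u v, G.dist u v ≤ D) {f : V → R} (hf : ∑ v, f v = 0) :
    4 * (f ⬝ᵥ f) ≤ Fintype.card V * D * (f ⬝ᵥ G.lapMatrix R *ᵥ f) := by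
  have := hG.nonempty
  have card_pos : (0 : R) < Fintype.card V := mod_cast Fintype.card_pos
  have card_bound (d : G.Dart) :
      (4 * #(closerVertices G d.fst d.snd) * #(closerVertices G d.snd d.fst) : R)
        ≤ Fintype.card V ^ 2 :=
    mod_cast four_mul_card_mul_card_le_sq_of_disjoint (disjoint_closerVertices G d.fst d.snd)
  refine le_of_mul_le_mul_left ?_ (mul_pos two_pos card_pos)
  calc 2 * Fintype.card V * (4 * (f ⬝ᵥ f)) = 4 * ∑ u, ∑ v, (f u - f v) ^ 2 := by
        rw [sum_sum_sq_sub, hf]; ring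
    _ ≤ 4 * (D * ∑ d : G.Dart, #(closerVertices G d.fst d.snd) *
          #(closerVertices G d.snd d.fst) * (f d.fst - f d.snd) ^ 2) := by
        gcongr
        exact sum_sum_sq_sub_le_mul_sum_darts hG hD f
    _ = D * ∑ d : G.Dart, 4 * #(closerVertices G d.fst d.snd) *
          #(closerVertices G d.snd d.fst) * (f d.fst - f d.snd) ^ 2 := by
        simp only [mul_left_comm (4 : R), mul_sum, mul_assoc]
    _ ≤ D * ∑ d : G.Dart, Fintype.card V ^ 2 * (f d.fst - f d.snd) ^ 2 := by
        gcongr with d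
        exact card_bound d
    _ = 2 * Fintype.card V * (Fintype.card V * D * (f ⬝ᵥ G.lapMatrix R *ᵥ f)) := by
        rw [← mul_sum, ← two_mul_dotProduct_lapMatrix_mulVec]; ring

end Poincare

/-- The second smallest eigenvalue is the least value of the maximum of two eigenvalues with
distinct indices, so this form needs no increasing enumeration of the spectrum. -/
theorem algebraic_connectivity_ge_four_div_n_mul_diam_general {V : Type*} [Fintype V]
    [DecidableEq V] {G : SimpleGraph V} [DecidableRel G.Adj] (hG : G.Connected)
    (hL : (G.lapMatrix ℝ).IsHermitian) {D : ℕ} (hD : ∀ u v, G.dist u v ≤ D)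
    {i j : V} (hij : i ≠ j) :
    4 / ((Fintype.card V : ℝ) * D) ≤ max (hL.eigenvalues i) (hL.eigenvalues j) := by
  have D_pos : 0 < D := (hG.pos_dist_of_ne hij).trans_le (hD i j)
  have card_pos : 0 < Fintype.card V := Fintype.card_pos_iff.2 ⟨i⟩
  refine le_max_eigenvalues_of_forall_mem_ker hL (∑ v, LinearMap.proj v) (fun f hf ↦ ?_) hij
  have sum_eq_zero : ∑ v, f v = 0 := by simpa using hf
  have poincare := four_mul_dotProduct_self_le_mul_dotProduct_lapMatrix_mulVec hG hD sum_eq_zero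
  simp only [star_trivial, RCLike.re_to_real]
  rwa [div_mul_eq_mul_div, div_le_iff₀' (by positivity)]

/-- **Lower bound on algebraic connectivity via the diameter.**  For a finite simple
connected graph on `n ≥ 2` vertices with diameter `D` and second smallest eigenvalue
`λ₂` of the combinatorial Laplacian `L = Deg - A` (here `μ` is a monotone enumeration of
the eigenvalues of `L`, so `λ₂ = μ 1`), we have `λ₂ ≥ 4 / (n D)`. -/
theorem algebraic_connectivity_ge_four_div_n_mul_diam
    {n : ℕ} (hn : 1 < n) (G : SimpleGraph (Fin n)) [DecidableRel G.Adj]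
    (hG : G.Connected)
    (hL : (G.lapMatrix ℝ).IsHermitian)
    (μ : Fin n → ℝ) (hmono : Monotone μ)
    (hperm : ∃ σ : Equiv.Perm (Fin n), hL.eigenvalues ∘ σ = μ)
    (D : ℕ) (hDub : ∀ u v : Fin n, G.dist u v ≤ D)
    (hDattained : ∃ u v : Fin n, G.dist u v = D) :
    4 / ((n : ℝ) * (D : ℝ)) ≤ μ ⟨1, hn⟩ := by
  obtain ⟨σ, rfl⟩ := hperm
  have eigenvalues_le : hL.eigenvalues (σ ⟨0, by omega⟩) ≤ hL.eigenvalues (σ ⟨1, hn⟩) :=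
    hmono (Fin.mk_le_mk.2 zero_le_one)
  simpa [max_eq_right eigenvalues_le] using
    algebraic_connectivity_ge_four_div_n_mul_diam_general hG hL hDub
      (σ.injective.ne (a₁ := ⟨0, by omega⟩) (a₂ := ⟨1, hn⟩) (by simp))
end

section
/- Let $G$ be a finite simple connected graph and let $(i,j)$ be an edge of $G$. Let $t = |N(i) \cap N(j)|$ be the number of common neighbors of $i$ and $j$ (i.e., the number of triangles containing the edge $(i,j)$). Then the effective resistance between $i$ and $j$ satisfies $\omega(i,j) \le \frac{2}{t + 2}$. -/
open Matrix

/-- `B` is the Moore–Penrose pseudoinverse of `A` (the four Penrose conditions; for any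
real matrix such a `B` exists and is unique). -/
def IsMoorePenroseInverse {m : Type*} [Fintype m] (A B : Matrix m m ℝ) : Prop :=
  A * B * A = A ∧ B * A * B = B ∧ (A * B)ᵀ = A * B ∧ (B * A)ᵀ = B * A

/-- The effective resistance `ω(i,j) = (eᵢ - eⱼ)ᵀ L† (eᵢ - eⱼ)`, expressed via any matrix
`M` (in applications, the Moore–Penrose pseudoinverse `L†` of the Laplacian). -/
noncomputable def effectiveResistance {n : ℕ} (M : Matrix (Fin n) (Fin n) ℝ)
    (i j : Fin n) : ℝ :=
  (Pi.single i (1 : ℝ) - Pi.single j 1) ⬝ᵥ M.mulVec (Pi.single i (1 : ℝ) - Pi.single j 1)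

/-!
Let `L M L = L`. The rows of `1 - L M` lie in `ker L`, so they are constant on connected components
and annihilate `eᵢ - eⱼ`. Hence the potential `f = M (eᵢ - eⱼ)` satisfies `L f = eᵢ - eⱼ`, so that
`ω(i,j) = f i - f j = fᵀ L f`, and an energy bound `c (f i - f j)² ≤ fᵀ L f` gives `ω(i,j) ≤ 1 / c`.
Here `c = (t + 2) / 2`: the edge `(i,j)` contributes `(f i - f j)²`, and each common neighbour `k`
contributes `(f i - f k)² + (f j - f k)² ≥ (f i - f j)² / 2`, as a path of two edges has
resistance `2`.
-/

section LinearAlgebra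

theorem mulVec_mulVec_eq_self_of_forall_vecMul_eq_zero {m n R : Type*} [Fintype m] [Fintype n]
    [Ring R] {A : Matrix m n R} {M : Matrix n m R} (hM : A * M * A = A) {b : m → R}
    (hb : ∀ x, x ᵥ* A = 0 → x ⬝ᵥ b = 0) : A *ᵥ (M *ᵥ b) = b := by
  classical
  have residual_mul : (1 - A * M) * A = 0 := by rw [Matrix.sub_mul, Matrix.one_mul, hM, sub_self]
  have residual_mulVec : (1 - A * M) *ᵥ b = 0 := by
    ext k
    rw [← single_one_dotProduct k ((1 - A * M) *ᵥ b), dotProduct_mulVec]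
    exact hb _ (by rw [vecMul_vecMul, residual_mul, vecMul_zero])
  rw [sub_mulVec, one_mulVec, sub_eq_zero] at residual_mulVec
  rw [mulVec_mulVec, ← residual_mulVec]

theorem dotProduct_mulVec_le_inv {n K : Type*} [Fintype n]
    [Field K] [LinearOrder K] [IsStrictOrderedRing K] {A M : Matrix n n K} {b : n → K} {c : K}
    (hc : 0 < c) (hb : A *ᵥ (M *ᵥ b) = b) (hA : ∀ f, c * (b ⬝ᵥ f) ^ 2 ≤ f ⬝ᵥ A *ᵥ f) :
    b ⬝ᵥ M *ᵥ b ≤ c⁻¹ := by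
  have energy_bound := hA (M *ᵥ b)
  rw [hb, dotProduct_comm (M *ᵥ b)] at energy_bound
  rw [← one_div, le_div_iff₀' hc]
  by_contra! h
  have pos : 0 < b ⬝ᵥ M *ᵥ b := pos_of_mul_pos_right (one_pos.trans h) hc.le
  linarith [mul_lt_mul_of_pos_right h pos]

end LinearAlgebra

section Laplacian

variable {V K : Type*} [Fintype V] [DecidableEq V] [Field K]
  (G : SimpleGraph V) [DecidableRel G.Adj] {i j : V}

theorem two_mul_dotProduct_lapMatrix_mulVec_s4 [CharZero K] (f : V → K) :
    2 * (f ⬝ᵥ G.lapMatrix K *ᵥ f) = ∑ v, ∑ u ∈ G.neighborFinset v, (f v - f u) ^ 2 := by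
  simp only [← toLinearMap₂'_apply', SimpleGraph.lapMatrix_toLinearMap₂',
    SimpleGraph.neighborFinset_eq_filter, Finset.sum_filter]
  ring

variable [LinearOrder K] [IsStrictOrderedRing K]

theorem eq_of_lapMatrix_mulVec_eq_zero {x : V → K} (hx : G.lapMatrix K *ᵥ x = 0)
    (hij : G.Reachable i j) : x i = x j := by
  have eq_of_adj : ∀ u v, G.Adj u v → x u = x v := by
    rw [← SimpleGraph.lapMatrix_toLinearMap₂'_apply'_eq_zero_iff_forall_adj, toLinearMap₂'_apply',
      hx, dotProduct_zero]
  obtain ⟨walk⟩ := hij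
  induction walk with
  | nil => rfl
  | cons adj _ ih => exact (eq_of_adj _ _ adj).trans ih

theorem lapMatrix_mulVec_mulVec_single_sub_single {M : Matrix V V K}
    (hM : G.lapMatrix K * M * G.lapMatrix K = G.lapMatrix K) (hij : G.Reachable i j) :
    G.lapMatrix K *ᵥ (M *ᵥ (Pi.single i 1 - Pi.single j 1)) = Pi.single i 1 - Pi.single j 1 := by
  refine mulVec_mulVec_eq_self_of_forall_vecMul_eq_zero hM fun x hx => ?_
  rw [← mulVec_transpose, G.isSymm_lapMatrix K] at hx
  rw [dotProduct_sub, dotProduct_single_one, dotProduct_single_one,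
    eq_of_lapMatrix_mulVec_eq_zero G hx hij, sub_self]

theorem sum_sq_triangles_le_dotProduct_lapMatrix_mulVec (hij : G.Adj i j) (f : V → K) :
    (f i - f j) ^ 2 +
        ∑ k ∈ G.neighborFinset i ∩ G.neighborFinset j, ((f i - f k) ^ 2 + (f j - f k) ^ 2) ≤
      f ⬝ᵥ G.lapMatrix K *ᵥ f := by
  set T := G.neighborFinset i ∩ G.neighborFinset j with hT
  have hiT : i ∉ T := by simp [hT]
  have hjT : j ∉ T := by simp [hT]
  have sum_le {v : V} {s : Finset V} (hs : s ⊆ G.neighborFinset v) :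
      ∑ u ∈ s, (f v - f u) ^ 2 ≤ ∑ u ∈ G.neighborFinset v, (f v - f u) ^ 2 :=
    Finset.sum_le_sum_of_subset_of_nonneg hs fun _ _ _ => sq_nonneg _
  have at_i : ∑ u ∈ insert j T, (f i - f u) ^ 2 ≤ ∑ u ∈ G.neighborFinset i, (f i - f u) ^ 2 :=
    sum_le (Finset.insert_subset (by simpa using hij) Finset.inter_subset_left)
  have at_j : ∑ u ∈ insert i T, (f j - f u) ^ 2 ≤ ∑ u ∈ G.neighborFinset j, (f j - f u) ^ 2 :=
    sum_le (Finset.insert_subset (by simpa using hij.symm) Finset.inter_subset_right)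
  have at_T : ∑ k ∈ T, ((f i - f k) ^ 2 + (f j - f k) ^ 2) ≤
      ∑ k ∈ T, ∑ u ∈ G.neighborFinset k, (f k - f u) ^ 2 := by
    refine Finset.sum_le_sum fun k hk => ?_
    rw [sub_sq_comm (f i), sub_sq_comm (f j),
      ← Finset.sum_pair (f := fun u => (f k - f u) ^ 2) hij.ne]
    exact sum_le (by simpa [hT, Finset.insert_subset_iff, G.adj_comm k] using hk)
  have total : ∑ v ∈ insert i (insert j T), ∑ u ∈ G.neighborFinset v, (f v - f u) ^ 2 ≤
      2 * (f ⬝ᵥ G.lapMatrix K *ᵥ f) := by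
    rw [two_mul_dotProduct_lapMatrix_mulVec_s4]
    exact Finset.sum_le_univ_sum_of_nonneg fun v => Finset.sum_nonneg fun _ _ => sq_nonneg _
  rw [Finset.sum_insert (by simp [hij.ne, hiT]), Finset.sum_insert hjT] at total
  rw [Finset.sum_insert hjT] at at_i
  rw [Finset.sum_insert hiT, sub_sq_comm] at at_j
  rw [Finset.sum_add_distrib] at at_T ⊢
  linarith

theorem triangles_mul_sq_le_dotProduct_lapMatrix_mulVec (hij : G.Adj i j) (f : V → K) :
    (((G.neighborFinset i ∩ G.neighborFinset j).card : K) + 2) / 2 * (f i - f j) ^ 2 ≤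
      f ⬝ᵥ G.lapMatrix K *ᵥ f := by
  have path_energy (k : V) : (f i - f j) ^ 2 / 2 ≤ (f i - f k) ^ 2 + (f j - f k) ^ 2 := by
    linarith [sq_nonneg (f i + f j - 2 * f k)]
  calc (((G.neighborFinset i ∩ G.neighborFinset j).card : K) + 2) / 2 * (f i - f j) ^ 2
      = (f i - f j) ^ 2 + ∑ _k ∈ G.neighborFinset i ∩ G.neighborFinset j, (f i - f j) ^ 2 / 2 := by
        rw [Finset.sum_const, nsmul_eq_mul]
        ring
    _ ≤ (f i - f j) ^ 2 +
        ∑ k ∈ G.neighborFinset i ∩ G.neighborFinset j, ((f i - f k) ^ 2 + (f j - f k) ^ 2) := by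
        gcongr with k
        exact path_energy k
    _ ≤ f ⬝ᵥ G.lapMatrix K *ᵥ f := sum_sq_triangles_le_dotProduct_lapMatrix_mulVec G hij f

theorem effectiveResistance_le_of_triangles_general (hij : G.Adj i j) {M : Matrix V V K}
    (hM : G.lapMatrix K * M * G.lapMatrix K = G.lapMatrix K) :
    (Pi.single i 1 - Pi.single j 1) ⬝ᵥ M *ᵥ (Pi.single i 1 - Pi.single j 1) ≤
      2 / (((G.neighborFinset i ∩ G.neighborFinset j).card : K) + 2) := by
  rw [← inv_div]
  refine dotProduct_mulVec_le_inv (by positivity)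
    (lapMatrix_mulVec_mulVec_single_sub_single G hM hij.reachable) fun f => ?_
  rw [sub_dotProduct, single_one_dotProduct, single_one_dotProduct]
  exact triangles_mul_sq_le_dotProduct_lapMatrix_mulVec G hij f

end Laplacian

/-- **Effective resistance of an edge is bounded via triangles.**  If `(i,j)` is an edge
of a finite simple connected graph `G` contained in `t = |N(i) ∩ N(j)|` triangles, then
the effective resistance satisfies `ω(i,j) ≤ 2 / (t + 2)`. -/
theorem effectiveResistance_le_of_triangles
    {n : ℕ} (G : SimpleGraph (Fin n)) [DecidableRel G.Adj] (hG : G.Connected)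
    (i j : Fin n) (hij : G.Adj i j)
    (M : Matrix (Fin n) (Fin n) ℝ)
    (hM : IsMoorePenroseInverse (G.lapMatrix ℝ) M) :
    effectiveResistance M i j ≤
      2 / (((G.neighborFinset i ∩ G.neighborFinset j).card : ℝ) + 2) := by
  exact effectiveResistance_le_of_triangles_general G hij hM.1
end

section
/- Let $G$ be a finite simple connected graph on $n \ge 2$ vertices with combinatorial Laplacian eigenvalues $0 = \lambda_1 < \lambda_2 \le \cdots \le \lambda_n$. Then the sum of the effective resistances over all unordered pairs of distinct vertices satisfies $\sum_{\{i,j\} \subseteq V,\ i \ne j} \omega(i,j) = n \sum_{k=2}^{n} \frac{1}{\lambda_k}$. -/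
open Matrix Finset

/-!
Summing `ω(i,j) = Mᵢᵢ + Mⱼⱼ - Mᵢⱼ - Mⱼᵢ` over all ordered pairs gives `2 (n tr M - 1ᵀ M 1)`, and
`M = L†` annihilates the all-ones vector because `L` is symmetric and does so.
Diagonalizing `L` orthogonally diagonalizes `L†` as well, with every nonzero eigenvalue inverted,
so `tr L†` is the sum of the `λₖ⁻¹` with `λₖ ≠ 0`. Connectedness says that the kernel of `L` is
spanned by the all-ones vector, so `λ₁` is the only eigenvalue omitted.
-/

namespace IsMoorePenroseInverse

variable {m : Type*} [Fintype m] {A B C : Matrix m m ℝ}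

theorem transpose (hB : IsMoorePenroseInverse A B) : IsMoorePenroseInverse Aᵀ Bᵀ := by
  obtain ⟨hABA, hBAB, hAB, hBA⟩ := hB
  refine ⟨?_, ?_, ?_, ?_⟩
  · rw [mul_assoc, ← transpose_mul, ← transpose_mul, hABA]
  · rw [mul_assoc, ← transpose_mul, ← transpose_mul, hBAB]
  · rw [← transpose_mul, hBA, hBA]
  · rw [← transpose_mul, hAB, hAB]

theorem mul_left_eq_mul_left (hB : IsMoorePenroseInverse A B) (hC : IsMoorePenroseInverse A C) :
    A * B = A * C := by
  obtain ⟨hABA, -, hAB, -⟩ := hB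
  obtain ⟨hACA, -, hAC, -⟩ := hC
  calc A * B = (A * B)ᵀ := hAB.symm
    _ = ((A * C) * (A * B))ᵀ := by rw [← mul_assoc, hACA]
    _ = (A * B) * (A * C) := by rw [transpose_mul, hAB, hAC]
    _ = A * C := by rw [← mul_assoc, hABA]

theorem mul_right_eq_mul_right (hB : IsMoorePenroseInverse A B)
    (hC : IsMoorePenroseInverse A C) : B * A = C * A := by
  apply transpose_injective
  simpa only [transpose_mul] using hB.transpose.mul_left_eq_mul_left hC.transpose

theorem unique (hB : IsMoorePenroseInverse A B) (hC : IsMoorePenroseInverse A C) : B = C :=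
  calc B = B * A * B := hB.2.1.symm
    _ = C * A * C := by
      rw [hB.mul_right_eq_mul_right hC, mul_assoc, hB.mul_left_eq_mul_left hC, mul_assoc]
    _ = C := hC.2.1

theorem mulVec_eq_zero (hB : IsMoorePenroseInverse A B) {v : m → ℝ} (hv : Aᵀ *ᵥ v = 0) :
    B *ᵥ v = 0 := by
  obtain ⟨-, hBAB, hAB, -⟩ := hB
  have hB_eq : B = B * Bᵀ * Aᵀ := by rw [mul_assoc, ← transpose_mul, hAB, ← mul_assoc, hBAB]
  rw [hB_eq, ← mulVec_mulVec, hv, mulVec_zero]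

theorem diagonal_inv [DecidableEq m] (d : m → ℝ) :
    IsMoorePenroseInverse (diagonal d) (diagonal d⁻¹) := by
  have hd_inv (k : m) : (d k)⁻¹ * d k * (d k)⁻¹ = (d k)⁻¹ := by
    simpa only [inv_inv] using mul_inv_mul_cancel (d k)⁻¹
  simp [IsMoorePenroseInverse, diagonal_mul_diagonal, mul_inv_mul_cancel, hd_inv]

theorem mul_mul_transpose_same {l : Type*} [Fintype l] [DecidableEq m]
    (hB : IsMoorePenroseInverse A B) {U : Matrix l m ℝ} (hU : Uᵀ * U = 1) :
    IsMoorePenroseInverse (U * A * Uᵀ) (U * B * Uᵀ) := by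
  obtain ⟨hABA, hBAB, hAB, hBA⟩ := hB
  have conj_mul_conj (X Y : Matrix m m ℝ) : U * X * Uᵀ * (U * Y * Uᵀ) = U * (X * Y) * Uᵀ := by
    calc U * X * Uᵀ * (U * Y * Uᵀ) = U * X * (Uᵀ * U) * (Y * Uᵀ) := by
          simp only [Matrix.mul_assoc]
      _ = U * (X * Y) * Uᵀ := by simp only [hU, Matrix.mul_one, Matrix.mul_assoc]
  have conj_transpose {X : Matrix m m ℝ} (hX : Xᵀ = X) : (U * X * Uᵀ)ᵀ = U * X * Uᵀ := by
    rw [transpose_mul, transpose_mul, transpose_transpose, hX, Matrix.mul_assoc]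
  refine ⟨?_, ?_, ?_, ?_⟩
  · rw [conj_mul_conj, conj_mul_conj, hABA]
  · rw [conj_mul_conj, conj_mul_conj, hBAB]
  · rw [conj_mul_conj, conj_transpose hAB]
  · rw [conj_mul_conj, conj_transpose hBA]

theorem trace_eq_sum_inv_eigenvalues [DecidableEq m] (hB : IsMoorePenroseInverse A B)
    (hA : A.IsHermitian) :
    B.trace = ∑ k with hA.eigenvalues k ≠ 0, (hA.eigenvalues k)⁻¹ := by
  let U : Matrix m m ℝ := ↑hA.eigenvectorUnitary
  have hU : Uᵀ * U = 1 := Unitary.coe_star_mul_self hA.eigenvectorUnitary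
  have hA_eq : A = U * diagonal hA.eigenvalues * Uᵀ := by
    simpa [Unitary.conjStarAlgAut_apply, Function.comp_def, star_eq_conjTranspose]
      using hA.spectral_theorem
  have hB_eq : B = U * diagonal hA.eigenvalues⁻¹ * Uᵀ :=
    hB.unique <| by
      simpa only [← hA_eq] using (diagonal_inv hA.eigenvalues).mul_mul_transpose_same hU
  calc B.trace = ∑ k, (hA.eigenvalues k)⁻¹ := by
        rw [hB_eq, trace_mul_comm, ← mul_assoc, hU, one_mul, trace_diagonal]
        simp only [Pi.inv_apply]
    _ = ∑ k with hA.eigenvalues k ≠ 0, (hA.eigenvalues k)⁻¹ :=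
      (sum_filter_of_ne fun _ _ hk => inv_eq_zero.not.mp hk).symm

end IsMoorePenroseInverse

theorem card_eigenvalues_eq_zero_eq_finrank_ker {𝕜 m : Type*} [RCLike 𝕜] [Fintype m] [DecidableEq m]
    {A : Matrix m m 𝕜} (hA : A.IsHermitian) :
    #{k | hA.eigenvalues k = 0} = Module.finrank 𝕜 A.mulVecLin.ker := by
  have hrank : A.rank = #{k | hA.eigenvalues k ≠ 0} := by
    rw [hA.rank_eq_card_non_zero_eigs, Fintype.card_subtype]
  have hrank_nullity : A.rank + Module.finrank 𝕜 A.mulVecLin.ker = Fintype.card m := by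
    rw [rank, LinearMap.finrank_range_add_finrank_ker, Module.finrank_fintype_fun_eq_card]
  have hsplit : #{k | hA.eigenvalues k = 0} + #{k | hA.eigenvalues k ≠ 0} = Fintype.card m :=
    card_filter_add_card_filter_not _
  omega

theorem eq_zero_iff_eq_of_isBot {ι α : Type*} [Preorder ι] [PartialOrder α] [Zero α]
    {f : ι → α} (hf : Monotone f) (hf_nonneg : 0 ≤ f) (hf_zero : ∃! i, f i = 0) {b : ι}
    (hb : IsBot b) (i : ι) : f i = 0 ↔ i = b := by
  obtain ⟨z, hz⟩ := hf_zero.exists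
  have hfb : f b = 0 := le_antisymm (hz ▸ hf (hb z)) (hf_nonneg b)
  exact ⟨fun hi => hf_zero.unique hi hfb, fun hi => hi ▸ hfb⟩

theorem ker_lapMatrix_eq_span_one {V : Type*} [Fintype V] [DecidableEq V] {G : SimpleGraph V}
    [DecidableRel G.Adj] (hG : G.Connected) :
    (G.lapMatrix ℝ).mulVecLin.ker = ℝ ∙ (1 : V → ℝ) := by
  ext v
  rw [LinearMap.mem_ker, mulVecLin_apply, G.lapMatrix_mulVec_eq_zero_iff_forall_reachable,
    Submodule.mem_span_singleton]
  constructor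
  · intro hv
    obtain ⟨i⟩ := hG.nonempty
    exact ⟨v i, funext fun j => by simpa using hv i j (hG.preconnected i j)⟩
  · rintro ⟨c, rfl⟩ i j -
    simp only [Pi.smul_apply, Pi.one_apply]

section EffectiveResistance

variable {n : ℕ} (M : Matrix (Fin n) (Fin n) ℝ)

theorem effectiveResistance_eq (i j : Fin n) :
    effectiveResistance M i j = M i i + M j j - M i j - M j i := by
  simp only [effectiveResistance, mulVec_sub, mulVec_single_one, sub_dotProduct, dotProduct_sub,
    single_one_dotProduct, col_apply]
  ring

theorem sum_offDiag_effectiveResistance :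
    ∑ p ∈ univ.offDiag, effectiveResistance M p.1 p.2 =
      2 * (n * M.trace - ∑ i, ∑ j, M i j) := by
  have hdiag : ∑ p ∈ univ.offDiag, effectiveResistance M p.1 p.2 =
      ∑ i, ∑ j, effectiveResistance M i j := by
    rw [← sum_product', univ_product_univ]
    refine sum_subset (subset_univ _) fun p _ hp => ?_
    have hp : p.1 = p.2 := by simpa using hp
    rw [effectiveResistance_eq, hp]
    ring
  have hswap : ∑ i, ∑ j, M j i = ∑ i, ∑ j, M i j := sum_comm
  rw [hdiag]
  simp only [effectiveResistance_eq, sum_sub_distrib, sum_add_distrib, hswap, sum_const,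
    card_univ, Fintype.card_fin, nsmul_eq_mul, ← mul_sum, trace, diag_apply]
  ring

variable {M} {L : Matrix (Fin n) (Fin n) ℝ}

theorem sum_effectiveResistance_eq_mul_trace (hM : IsMoorePenroseInverse L M)
    (hL : L.IsHermitian) (hL_one : L *ᵥ 1 = 0) :
    (∑ p ∈ univ.offDiag, effectiveResistance M p.1 p.2) / 2 = n * M.trace := by
  have hL_transpose : Lᵀ = L := hL
  have hM_one : M *ᵥ 1 = 0 := hM.mulVec_eq_zero (by rw [hL_transpose, hL_one])
  have hM_row (i : Fin n) : ∑ j, M i j = 0 := by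
    simpa only [mulVec, dotProduct_one, Pi.zero_apply] using congrFun hM_one i
  rw [sum_offDiag_effectiveResistance, sum_congr rfl fun i _ => hM_row i, sum_const_zero]
  ring

theorem sum_effectiveResistance_eq_general (hn : 0 < n) (hM : IsMoorePenroseInverse L M)
    (hL : L.PosSemidef) (hL_ker : L.mulVecLin.ker = ℝ ∙ (1 : Fin n → ℝ)) {μ : Fin n → ℝ}
    (hμ : Monotone μ) (hμ_perm : ∃ σ : Equiv.Perm (Fin n), hL.1.eigenvalues ∘ σ = μ) :
    (∑ p ∈ univ.offDiag, effectiveResistance M p.1 p.2) / 2 =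
      n * ∑ k with k ≠ ⟨0, hn⟩, (μ k)⁻¹ := by
  have : NeZero n := ⟨hn.ne'⟩
  obtain ⟨σ, rfl⟩ := hμ_perm
  have hL_one : L *ᵥ 1 = 0 := by
    rw [← mulVecLin_apply, ← LinearMap.mem_ker, hL_ker]
    exact Submodule.mem_span_singleton_self 1
  have hsimple : ∃! k, hL.1.eigenvalues k = 0 := by
    have hcard : #{k | hL.1.eigenvalues k = 0} = 1 := by
      rw [card_eigenvalues_eq_zero_eq_finrank_ker, hL_ker, finrank_span_singleton one_ne_zero]
    simpa [card_eq_one_iff_existsUnique] using hcard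
  have hzero (k : Fin n) : hL.1.eigenvalues (σ k) = 0 ↔ k = ⟨0, hn⟩ :=
    eq_zero_iff_eq_of_isBot hμ (fun i => hL.eigenvalues_nonneg (σ i))
      (σ.bijective.existsUnique_iff.mp hsimple) (fun _ => Nat.zero_le _) k
  rw [sum_effectiveResistance_eq_mul_trace hM hL.1 hL_one, hM.trace_eq_sum_inv_eigenvalues hL.1]
  congr 1
  exact (sum_equiv σ (fun k => by simp only [mem_filter_univ, ne_eq, hzero]) fun _ _ => rfl).symm

end EffectiveResistance

/-- **Total effective resistance via Laplacian eigenvalues.**  For a finite simple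
connected graph on `n ≥ 2` vertices with Laplacian eigenvalues
`0 = λ₁ < λ₂ ≤ ⋯ ≤ λₙ` (here `μ` is a monotone enumeration of the eigenvalues), the sum
of the effective resistances over all unordered pairs of distinct vertices (one half of
the sum over ordered pairs) equals `n ∑_{k=2}^{n} 1/λₖ`. -/
theorem sum_effectiveResistance_eq
    {n : ℕ} (hn : 1 < n) (G : SimpleGraph (Fin n)) [DecidableRel G.Adj]
    (hG : G.Connected)
    (M : Matrix (Fin n) (Fin n) ℝ)
    (hM : IsMoorePenroseInverse (G.lapMatrix ℝ) M)
    (hL : (G.lapMatrix ℝ).IsHermitian)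
    (μ : Fin n → ℝ) (hmono : Monotone μ)
    (hperm : ∃ σ : Equiv.Perm (Fin n), hL.eigenvalues ∘ σ = μ) :
    (∑ p ∈ Finset.univ.offDiag, effectiveResistance M p.1 p.2) / 2 =
      (n : ℝ) * ∑ k ∈ Finset.univ.filter (fun k : Fin n => k ≠ ⟨0, by omega⟩), (μ k)⁻¹ :=
  sum_effectiveResistance_eq_general (by omega) hM (G.posSemidef_lapMatrix ℝ)
    (ker_lapMatrix_eq_span_one hG) hmono hperm
end

section
/- Let $G$ be a finite simple connected graph and let $e = (i,j)$ be an edge of $G$. If $T$ is a uniformly random spanning tree of $G$, then the probability that $e$ is an edge of $T$ equals the effective resistance $\omega(i,j)$. -/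
/-!
Every spanning tree `T` carries a unit current from `i` to `j`, flowing along its unique path.
The sum of these currents over all spanning trees is the gradient of a potential `v`: a tree through
an edge `(x, y)` is a two-component forest separating `x` from `y` plus that edge, and only forests
that also separate `i` from `j` contribute, so the roles of `(x, y)` and `(i, j)` can be exchanged.
Kirchhoff's node law for each `T` then gives `L v = N (eᵢ - eⱼ)`, with `N` the number of spanning
trees, whence `ω(i, j) = (vᵢ - vⱼ) / N`. The drop `vᵢ - vⱼ` counts the two-component forests
separating `i` from `j`; if `(i, j)` is an edge, adding it turns these into the spanning trees
containing it.
-/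

open Matrix

section

open SimpleGraph

variable {V : Type*} {F G T : SimpleGraph V} {i j x y : V}

/-- `F` is a forest with exactly two components, one containing `x` and the other `y`: what remains
of a tree on `V` when its edge `(x, y)` is deleted. -/
structure IsSeparatingForest (F : SimpleGraph V) (x y : V) : Prop where
  isAcyclic : F.IsAcyclic
  not_reachable : ¬ F.Reachable x y
  reachable_or : ∀ v, F.Reachable v x ∨ F.Reachable v y

namespace IsSeparatingForest

theorem reachable_left_iff_reachable_right (hF : IsSeparatingForest F x y)
    (hij : ¬ F.Reachable i j) : F.Reachable i x ↔ F.Reachable j y :=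
  ⟨fun hix ↦ (hF.reachable_or j).resolve_left fun hjx ↦ hij (hix.trans hjx.symm),
    fun hjy ↦ (hF.reachable_or i).resolve_right fun hiy ↦ hij (hiy.trans hjy.symm)⟩

theorem of_not_reachable (hF : IsSeparatingForest F x y) (hij : ¬ F.Reachable i j) :
    IsSeparatingForest F i j where
  isAcyclic := hF.isAcyclic
  not_reachable := hij
  reachable_or v := by
    rcases hF.reachable_or i with hix | hiy
    · have hjy := (hF.reachable_left_iff_reachable_right hij).1 hix
      exact (hF.reachable_or v).imp (·.trans hix.symm) (·.trans hjy.symm)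
    · have hjx := (hF.reachable_left_iff_reachable_right fun hji ↦ hij hji.symm).2 hiy
      exact (hF.reachable_or v).symm.imp (·.trans hiy.symm) (·.trans hjx.symm)

theorem isTree_sup_edge (hF : IsSeparatingForest F x y) : (F ⊔ edge x y).IsTree := by
  have hne : x ≠ y := by
    rintro rfl
    exact hF.not_reachable .rfl
  have hxy : (F ⊔ edge x y).Reachable x y := Adj.reachable (.inr (by simp [edge_adj, hne]))
  have reachable_x (v : V) : (F ⊔ edge x y).Reachable v x :=
    (hF.reachable_or v).elim (·.mono le_sup_left) fun hvy ↦ (hvy.mono le_sup_left).trans hxy.symm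
  have : Nonempty V := ⟨x⟩
  exact ⟨⟨fun u v ↦ (reachable_x u).trans (reachable_x v).symm⟩,
    hF.isAcyclic.sup_edge_of_not_reachable hF.not_reachable⟩

end IsSeparatingForest

theorem isSeparatingForest_deleteEdges (hT : T.IsTree) (hxy : T.Adj x y) :
    IsSeparatingForest (T.deleteEdges {s(x, y)}) x y where
  isAcyclic := hT.isAcyclic.anti (deleteEdges_le _)
  not_reachable := isAcyclic_iff_forall_adj_isBridge.1 hT.isAcyclic hxy
  reachable_or v := by
    refine or_iff_not_imp_right.2 fun hvy ↦ ?_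
    obtain ⟨p, hp⟩ := (hT.connected.preconnected v x).exists_isPath
    exact reachable_deleteEdges_iff_exists_walk.2 ⟨p, hp.isTrail.not_mem_edges_of_not_reachable hvy
      (isAcyclic_iff_forall_adj_isBridge.1 hT.isAcyclic hxy)⟩

theorem existsUnique_adj_not_reachable_deleteEdges (hT : T.IsTree) (hxi : x ≠ i) :
    ∃! y, T.Adj x y ∧ ¬ (T.deleteEdges {s(x, y)}).Reachable i x := by
  obtain ⟨p, hp⟩ := (hT.connected.preconnected x i).exists_isPath
  refine existsUnique_of_exists_of_unique ?_ fun y z hy hz ↦ ?_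
  · cases p with
    | nil => exact absurd rfl hxi
    | @cons _ y _ hxy q =>
      have hq : s(x, y) ∉ q.edges := fun h ↦
        ((Walk.cons_isPath_iff hxy q).1 hp).2 (q.fst_mem_support_of_mem_edges h)
      have hyi := reachable_deleteEdges_iff_exists_walk.2 ⟨q, hq⟩
      exact ⟨y, hxy, fun hix ↦
        (isSeparatingForest_deleteEdges hT hxy).not_reachable (hyi.trans hix).symm⟩
  · have eq_snd (w : V) (hw : T.Adj x w ∧ ¬ (T.deleteEdges {s(x, w)}).Reachable i x) :
        w = p.snd :=
      hT.isAcyclic.eq_snd_of_adj_start hp hw.1 <| p.snd_mem_support_of_mem_edges <|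
        p.mem_edges_of_not_reachable_deleteEdges fun hxi ↦ hw.2 hxi.symm
    exact (eq_snd y hy).trans (eq_snd z hz).symm

section Enumeration

variable [Finite V]

/-- The spanning trees of `G`, encoded as graphs on the vertex set of `G` so that sums over them are
sums over a finset. -/
noncomputable def spanningTrees (G : SimpleGraph V) : Finset (SimpleGraph V) :=
  (Set.toFinite {T | T ≤ G ∧ T.IsTree}).toFinset

/-- The spanning two-component forests of `G` that separate `x` from `y`, encoded like the spanning
trees; each is determined by its edges, isolated vertices being components. -/
noncomputable def separatingForests (G : SimpleGraph V) (x y : V) : Finset (SimpleGraph V) :=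
  (Set.toFinite {F | F ≤ G ∧ IsSeparatingForest F x y}).toFinset

@[simp]
theorem mem_spanningTrees : T ∈ spanningTrees G ↔ T ≤ G ∧ T.IsTree := by
  simp [spanningTrees]

@[simp]
theorem mem_separatingForests :
    F ∈ separatingForests G x y ↔ F ≤ G ∧ IsSeparatingForest F x y := by
  simp [separatingForests]

theorem card_spanningTrees_pos (hG : G.Connected) : 0 < (spanningTrees G).card :=
  have ⟨T, hTG, hT⟩ := hG.exists_isTree_le
  Finset.card_pos.2 ⟨T, mem_spanningTrees.2 ⟨hTG, hT⟩⟩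

open scoped Classical in
theorem sum_spanningTrees_adj {M : Type*} [AddCommMonoid M] (hxy : G.Adj x y)
    (f : SimpleGraph V → M) :
    ∑ T ∈ spanningTrees G with T.Adj x y, f (T.deleteEdges {s(x, y)}) =
      ∑ F ∈ separatingForests G x y, f F := by
  refine Finset.sum_nbij' (·.deleteEdges {s(x, y)}) (· ⊔ edge x y) ?_ ?_ ?_ ?_ fun _ _ ↦ rfl
  · intro T hT
    simp only [Finset.mem_filter, mem_spanningTrees, mem_separatingForests] at hT ⊢
    exact ⟨(deleteEdges_le _).trans hT.1.1, isSeparatingForest_deleteEdges hT.1.2 hT.2⟩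
  · intro F hF
    simp only [Finset.mem_filter, mem_spanningTrees, mem_separatingForests] at hF ⊢
    exact ⟨⟨sup_le hF.1 ((edge_le_iff _).2 (.inr hxy)), hF.2.isTree_sup_edge⟩,
      .inr (by simp [edge_adj, hxy.ne])⟩
  · intro T hT
    exact sdiff_sup_cancel ((edge_le_iff _).2 (.inr (Finset.mem_filter.1 hT).2))
  · intro F hF
    have hF_adj : ¬ F.Adj x y := fun h ↦ (mem_separatingForests.1 hF).2.not_reachable h.reachable
    exact ((disjoint_edge F).2 hF_adj).sup_sdiff_cancel_right

open scoped Classical in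
theorem ncard_spanningTree_adj (hxy : G.Adj x y) :
    {T | T ≤ G ∧ T.IsTree ∧ T.Adj x y}.ncard = (separatingForests G x y).card := by
  calc {T | T ≤ G ∧ T.IsTree ∧ T.Adj x y}.ncard
      = {T ∈ spanningTrees G | T.Adj x y}.card := by
        rw [← Set.ncard_coe_finset]
        simp only [Finset.coe_filter, mem_spanningTrees, and_assoc]
    _ = (separatingForests G x y).card := by
        simpa only [Finset.card_eq_sum_ones] using sum_spanningTrees_adj hxy fun _ ↦ 1

end Enumeration

section Current

variable {R : Type*} [AddCommGroupWithOne R]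

open scoped Classical in
/-- The `{0, 1}`-valued indicator of `a` and `b` lying in the same component of `F`. In a tree `T`,
the unit current from `i` to `j` has on each directed edge `(x, y)` the value
`reachIndicator R F i x - reachIndicator R F j x`, where `F` is `T` without that edge. -/
noncomputable def reachIndicator (R : Type*) [Zero R] [One R] (F : SimpleGraph V) (a b : V) : R :=
  if F.Reachable a b then 1 else 0

theorem reachIndicator_congr {a b c d : V} (h : F.Reachable a b ↔ F.Reachable c d) :
    reachIndicator R F a b = reachIndicator R F c d := by
  classical exact if_congr h rfl rfl

theorem reachIndicator_comm (a b : V) : reachIndicator R F a b = reachIndicator R F b a :=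
  reachIndicator_congr ⟨Reachable.symm, Reachable.symm⟩

theorem sum_one_sub_reachIndicator_deleteEdges (hT : T.IsTree) (x i : V)
    [Fintype (T.neighborSet x)] [Decidable (x = i)] :
    ∑ y ∈ T.neighborFinset x, (1 - reachIndicator R (T.deleteEdges {s(x, y)}) i x) =
      if x = i then 0 else 1 := by
  split_ifs with hxi
  · subst hxi
    simp [reachIndicator]
  · obtain ⟨y, ⟨hxy, hy⟩, hy_unique⟩ := existsUnique_adj_not_reachable_deleteEdges hT hxi
    rw [Finset.sum_eq_single_of_mem y ((T.mem_neighborFinset x y).2 hxy)]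
    · simp [reachIndicator, hy]
    · intro z hz hzy
      have hz_reach : (T.deleteEdges {s(x, z)}).Reachable i x := by
        by_contra h
        exact hzy (hy_unique z ⟨(T.mem_neighborFinset x z).1 hz, h⟩)
      simp [reachIndicator, hz_reach]

-- Kirchhoff's node law for the unit current from `i` to `j` along `T`.
theorem sum_reachIndicator_deleteEdges_sub [DecidableEq V] (hT : T.IsTree) (i j x : V)
    [Fintype (T.neighborSet x)] :
    ∑ y ∈ T.neighborFinset x, (reachIndicator R (T.deleteEdges {s(x, y)}) i x -
        reachIndicator R (T.deleteEdges {s(x, y)}) j x) =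
      (Pi.single i 1 - Pi.single j 1 : V → R) x := by
  have hi := sum_one_sub_reachIndicator_deleteEdges (R := R) hT x i
  have hj := sum_one_sub_reachIndicator_deleteEdges (R := R) hT x j
  calc _ = ∑ y ∈ T.neighborFinset x, (1 - reachIndicator R (T.deleteEdges {s(x, y)}) j x) -
        ∑ y ∈ T.neighborFinset x, (1 - reachIndicator R (T.deleteEdges {s(x, y)}) i x) := by
        simp only [← Finset.sum_sub_distrib, sub_sub_sub_cancel_left]
    _ = _ := by
        rw [hi, hj, Pi.sub_apply, Pi.single_apply, Pi.single_apply]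
        split_ifs <;> simp

variable [Finite V]

theorem sum_separatingForests_comm (G : SimpleGraph V) (x y i j : V) :
    ∑ F ∈ separatingForests G x y, (reachIndicator R F i x - reachIndicator R F j x) =
      ∑ F ∈ separatingForests G i j, (reachIndicator R F x i - reachIndicator R F y i) := by
  have vanish {a b c d : V} (F) (hF : F ∈ separatingForests G a b)
      (hF' : F ∉ separatingForests G c d) :
      reachIndicator R F c a - reachIndicator R F d a = 0 := by
    have hcd : F.Reachable c d := by
      by_contra h
      rw [mem_separatingForests] at hF hF'
      exact hF' ⟨hF.1, hF.2.of_not_reachable h⟩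
    exact sub_eq_zero.2 (reachIndicator_congr ⟨hcd.symm.trans, hcd.trans⟩)
  refine Finset.sum_congr_of_eq_on_inter vanish vanish fun F hxy hij ↦ ?_
  have hF := (mem_separatingForests.1 hxy).2
  have hji : ¬ F.Reachable j i := fun h ↦ (mem_separatingForests.1 hij).2.not_reachable h.symm
  rw [reachIndicator_comm i x, reachIndicator_comm y i,
    reachIndicator_congr (hF.reachable_left_iff_reachable_right hji)]

/-- The number of spanning two-component forests of `G` separating `i` from `j` whose component
of `i` contains `x`: up to a scalar, the electrical potential of a unit current entering at `i`
and leaving at `j`. -/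
noncomputable def forestPotential (R : Type*) [AddCommMonoidWithOne R] (G : SimpleGraph V)
    (i j x : V) : R :=
  ∑ F ∈ separatingForests G i j, reachIndicator R F x i

theorem forestPotential_source (G : SimpleGraph V) (i j : V) :
    forestPotential R G i j i = (separatingForests G i j).card := by
  simp [forestPotential, reachIndicator]

theorem forestPotential_sink (G : SimpleGraph V) (i j : V) :
    forestPotential R G i j j = 0 := by
  refine Finset.sum_eq_zero fun F hF ↦ if_neg fun hji ↦ ?_
  exact (mem_separatingForests.1 hF).2.not_reachable hji.symm

open scoped Classical in
theorem forestPotential_sub_of_adj (hxy : G.Adj x y) (i j : V) :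
    forestPotential R G i j x - forestPotential R G i j y =
      ∑ T ∈ spanningTrees G with T.Adj x y, (reachIndicator R (T.deleteEdges {s(x, y)}) i x -
        reachIndicator R (T.deleteEdges {s(x, y)}) j x) := by
  rw [sum_spanningTrees_adj hxy fun F ↦ reachIndicator R F i x - reachIndicator R F j x,
    sum_separatingForests_comm, Finset.sum_sub_distrib]
  rfl

end Current

section Laplacian

variable [Fintype V] [DecidableEq V]

theorem lapMatrix_mulVec_apply_eq_sum_sub {R : Type*} [NonAssocRing R] (G : SimpleGraph V)
    [DecidableRel G.Adj] (v : V → R) (x : V) :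
    (G.lapMatrix R *ᵥ v) x = ∑ y ∈ G.neighborFinset x, (v x - v y) := by
  rw [lapMatrix_mulVec_apply, Finset.sum_sub_distrib, Finset.sum_const, nsmul_eq_mul,
    card_neighborFinset_eq_degree]

theorem lapMatrix_mulVec_forestPotential {R : Type*} [NonAssocRing R] (G : SimpleGraph V)
    [DecidableRel G.Adj] (i j : V) :
    G.lapMatrix R *ᵥ forestPotential R G i j =
      ((spanningTrees G).card : R) • (Pi.single i 1 - Pi.single j 1) := by
  classical
  ext x
  calc (G.lapMatrix R *ᵥ forestPotential R G i j) x
      = ∑ y ∈ G.neighborFinset x, ∑ T ∈ spanningTrees G with T.Adj x y,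
          (reachIndicator R (T.deleteEdges {s(x, y)}) i x -
            reachIndicator R (T.deleteEdges {s(x, y)}) j x) := by
        rw [lapMatrix_mulVec_apply_eq_sum_sub]
        exact Finset.sum_congr rfl fun y hy ↦
          forestPotential_sub_of_adj ((G.mem_neighborFinset x y).1 hy) i j
    _ = ∑ T ∈ spanningTrees G, ∑ y ∈ T.neighborFinset x,
          (reachIndicator R (T.deleteEdges {s(x, y)}) i x -
            reachIndicator R (T.deleteEdges {s(x, y)}) j x) := by
        refine Finset.sum_comm' fun y T ↦ ?_
        simp only [Finset.mem_filter, mem_neighborFinset, mem_spanningTrees]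
        exact ⟨fun h ↦ ⟨h.2.2, h.2.1⟩, fun h ↦ ⟨h.2.1 h.1, h.2, h.1⟩⟩
    _ = ∑ _T ∈ spanningTrees G, (Pi.single i 1 - Pi.single j 1 : V → R) x :=
        Finset.sum_congr rfl fun T hT ↦
          sum_reachIndicator_deleteEdges_sub (mem_spanningTrees.1 hT).2 i j x
    _ = _ := by rw [Finset.sum_const, nsmul_eq_mul, Pi.smul_apply, smul_eq_mul]

end Laplacian

theorem mulVec_dotProduct_mulVec_mulVec {m R : Type*} [Fintype m] [CommSemiring R]
    {A M : Matrix m m R} (hA : A.IsSymm) (hM : A * M * A = A) (v : m → R) :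
    A *ᵥ v ⬝ᵥ M *ᵥ (A *ᵥ v) = v ⬝ᵥ A *ᵥ v := by
  calc A *ᵥ v ⬝ᵥ M *ᵥ (A *ᵥ v) = v ⬝ᵥ (A * M * A) *ᵥ v := by
        rw [← mulVec_mulVec, ← mulVec_mulVec, dotProduct_mulVec v, ← mulVec_transpose, hA]
    _ = v ⬝ᵥ A *ᵥ v := by rw [hM]

theorem card_separatingForests_div_card_spanningTrees {K : Type*} [Field K] [CharZero K]
    [Fintype V] [DecidableEq V] [DecidableRel G.Adj] (hG : G.Connected) (i j : V)
    {M : Matrix V V K} (hM : G.lapMatrix K * M * G.lapMatrix K = G.lapMatrix K) :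
    ((separatingForests G i j).card : K) / (spanningTrees G).card =
      (Pi.single i 1 - Pi.single j 1) ⬝ᵥ M *ᵥ (Pi.single i 1 - Pi.single j 1) := by
  set d : V → K := Pi.single i 1 - Pi.single j 1
  have hN : ((spanningTrees G).card : K) ≠ 0 := Nat.cast_ne_zero.2 (card_spanningTrees_pos hG).ne'
  have drop : forestPotential K G i j ⬝ᵥ d = (separatingForests G i j).card := by
    simp [d, dotProduct_sub, forestPotential_source, forestPotential_sink]
  have energy := mulVec_dotProduct_mulVec_mulVec (G.isSymm_lapMatrix K) hM (forestPotential K G i j)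
  rw [lapMatrix_mulVec_forestPotential, mulVec_smul, smul_dotProduct, dotProduct_smul,
    dotProduct_smul, drop] at energy
  simp only [smul_eq_mul] at energy
  rw [div_eq_iff hN, ← mul_left_cancel₀ hN energy, mul_comm]

theorem prob_edge_mem_uniform_spanning_tree_eq_effectiveResistance_general
    {K : Type*} [Field K] [CharZero K] [Fintype V] [DecidableEq V] (G : SimpleGraph V)
    [DecidableRel G.Adj] (hG : G.Connected) (i j : V) (hij : G.Adj i j) (M : Matrix V V K)
    (hM : G.lapMatrix K * M * G.lapMatrix K = G.lapMatrix K) :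
    ({T | T ≤ G ∧ T.IsTree ∧ T.Adj i j}.ncard : K) / {T | T ≤ G ∧ T.IsTree}.ncard =
      (Pi.single i 1 - Pi.single j 1) ⬝ᵥ M *ᵥ (Pi.single i 1 - Pi.single j 1) := by
  rw [ncard_spanningTree_adj hij, Set.ncard_eq_toFinset_card {T | T ≤ G ∧ T.IsTree}]
  exact card_separatingForests_div_card_spanningTrees hG i j hM

end

/-- **Edge probability in a uniform random spanning tree equals effective resistance.**
For an edge `(i,j)` of a finite simple connected graph `G`, the probability that a
uniformly random spanning tree of `G` contains the edge — i.e. the number of spanning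
trees containing it divided by the total number of spanning trees — equals `ω(i,j)`. -/
theorem prob_edge_mem_uniform_spanning_tree_eq_effectiveResistance
    {n : ℕ} (G : SimpleGraph (Fin n)) [DecidableRel G.Adj] (hG : G.Connected)
    (i j : Fin n) (hij : G.Adj i j)
    (M : Matrix (Fin n) (Fin n) ℝ)
    (hM : IsMoorePenroseInverse (G.lapMatrix ℝ) M) :
    (({T : SimpleGraph (Fin n) | T ≤ G ∧ T.IsTree ∧ T.Adj i j}).ncard : ℝ) /
        (({T : SimpleGraph (Fin n) | T ≤ G ∧ T.IsTree}).ncard : ℝ) =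
      effectiveResistance M i j :=
  prob_edge_mem_uniform_spanning_tree_eq_effectiveResistance_general G hG i j hij M hM.1
end

section
/- Let $G$ be a finite simple connected graph on $n$ vertices. Then the sum of the effective resistances over all edges of $G$ satisfies $\sum_{(i,j) \in E} \omega(i,j) = n - 1$ (Foster's theorem). -/
open Matrix Finset

/-!
The Laplacian `L` is the sum over the edges `ij` of the rank-one matrices `(eᵢ - eⱼ)(eᵢ - eⱼ)ᵀ`,
so the sum of the quadratic form of `M` over the edge vectors is `tr (M L)`. When `L M L = L`, the
matrix `M L` is idempotent with the same rank as `L`; its trace is therefore `rank L`, the number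
of vertices minus the number of connected components.
-/

section GeneralizedInverse

variable {m n R K : Type*} [Fintype m] [Fintype n]

theorem trace_eq_rank_of_isIdempotentElem [Field K] {P : Matrix n n K}
    (hP : IsIdempotentElem P) : P.trace = P.rank := by
  classical
  have hP' : IsIdempotentElem P.toLin' := hP.map toLinAlgEquiv'
  rw [← trace_toLin'_eq, (LinearMap.IsIdempotentElem.isProj_range _ hP').trace, rank, toLin'_apply']

theorem rank_mul_of_mul_mul_eq [CommSemiring R] [StrongRankCondition R]
    {A : Matrix m n R} {B : Matrix n m R} (h : A * B * A = A) : (B * A).rank = A.rank := by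
  refine le_antisymm (rank_mul_le_right B A) ?_
  calc A.rank = (A * (B * A)).rank := by rw [← Matrix.mul_assoc, h]
    _ ≤ (B * A).rank := rank_mul_le_right A (B * A)

theorem trace_mul_of_mul_mul_eq [Field K] {A : Matrix m n K} {B : Matrix n m K}
    (h : A * B * A = A) : (B * A).trace = A.rank := by
  have hBA : IsIdempotentElem (B * A) := by
    rw [IsIdempotentElem, Matrix.mul_assoc, ← Matrix.mul_assoc A, h]
  rw [trace_eq_rank_of_isIdempotentElem hBA, rank_mul_of_mul_mul_eq h]

theorem trace_mul_vecMulVec [NonUnitalCommSemiring R] (M : Matrix m n R) (x : n → R) (y : m → R) :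
    (M * vecMulVec x y).trace = y ⬝ᵥ M *ᵥ x := by
  rw [mul_vecMulVec, trace_vecMulVec, dotProduct_comm]

end GeneralizedInverse

section Laplacian

variable {V R : Type*} [Fintype V] [DecidableEq V] (G : SimpleGraph V) [DecidableRel G.Adj]

theorem sum_adj_single_self_eq_degMatrix [AddCommMonoidWithOne R] :
    (∑ i, ∑ j, if G.Adj i j then single i i (1 : R) else 0) = G.degMatrix R := by
  rw [SimpleGraph.degMatrix, ← sum_single_eq_diagonal]
  refine sum_congr rfl fun i _ => ?_
  simp only [G.degree_eq_sum_if_adj, ← singleAddMonoidHom_apply, map_sum,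
    apply_ite (singleAddMonoidHom i i), map_zero]

theorem sum_adj_single_eq_adjMatrix [AddCommMonoidWithOne R] :
    (∑ i, ∑ j, if G.Adj i j then single i j (1 : R) else 0) = G.adjMatrix R := by
  rw [matrix_eq_sum_single (G.adjMatrix R)]
  simp only [SimpleGraph.adjMatrix_apply, apply_ite, single_zero]

theorem sum_adj_vecMulVec_single_sub_single [Ring R] :
    (∑ i, ∑ j, if G.Adj i j then
        vecMulVec (Pi.single i (1 : R) - Pi.single j 1) (Pi.single i 1 - Pi.single j 1) else 0) =
      (2 : R) • G.lapMatrix R := by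
  have expand (i j : V) :
      vecMulVec (Pi.single i (1 : R) - Pi.single j 1) (Pi.single i 1 - Pi.single j 1) =
        (single i i (1 : R) - single i j 1) + (single j j 1 - single j i 1) := by
    simp only [sub_vecMulVec, vecMulVec_sub, single_eq_single_vecMulVec_single]
    abel
  have half : (∑ i, ∑ j, if G.Adj i j then single i i (1 : R) - single i j 1 else 0) =
      G.lapMatrix R := by
    rw [SimpleGraph.lapMatrix, ← sum_adj_single_self_eq_degMatrix, ← sum_adj_single_eq_adjMatrix]
    simp only [← sum_sub_distrib, ite_sub_ite, sub_zero]
  have half_swapped : (∑ i, ∑ j, if G.Adj i j then single j j (1 : R) - single j i 1 else 0) =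
      G.lapMatrix R := by
    rw [← half, sum_comm]
    simp only [G.adj_comm]
  calc _ = (∑ i, ∑ j, if G.Adj i j then single i i (1 : R) - single i j 1 else 0) +
          ∑ i, ∑ j, if G.Adj i j then single j j (1 : R) - single j i 1 else 0 := by
        simp only [expand, ← sum_add_distrib, ite_add_ite, add_zero]
    _ = (2 : R) • G.lapMatrix R := by rw [half, half_swapped, two_smul]

theorem sum_adj_dotProduct_mulVec_single_sub_single [CommRing R] (M : Matrix V V R) :
    (∑ i, ∑ j, if G.Adj i j then
        (Pi.single i (1 : R) - Pi.single j 1) ⬝ᵥ M *ᵥ (Pi.single i 1 - Pi.single j 1) else 0) =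
      2 * (M * G.lapMatrix R).trace := by
  have h := congrArg (fun N => (M * N).trace) (sum_adj_vecMulVec_single_sub_single (R := R) G)
  simpa only [mul_sum, trace_sum, mul_ite, mul_zero, apply_ite trace, trace_zero,
    trace_mul_vecMulVec, mul_smul_comm, trace_smul, smul_eq_mul] using h

theorem rank_lapMatrix_add_card_connectedComponent :
    (G.lapMatrix ℝ).rank + Fintype.card G.ConnectedComponent = Fintype.card V := by
  rw [G.card_connectedComponent_eq_finrank_ker_toLin'_lapMatrix, rank, ← toLin'_apply',
    LinearMap.finrank_range_add_finrank_ker, Module.finrank_fintype_fun_eq_card]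

theorem foster_theorem_general (M : Matrix V V ℝ)
    (hM : G.lapMatrix ℝ * M * G.lapMatrix ℝ = G.lapMatrix ℝ) :
    (∑ i, ∑ j, if G.Adj i j then
        (Pi.single i (1 : ℝ) - Pi.single j 1) ⬝ᵥ M *ᵥ (Pi.single i 1 - Pi.single j 1) else 0) / 2 =
      (Fintype.card V : ℝ) - Fintype.card G.ConnectedComponent := by
  rw [sum_adj_dotProduct_mulVec_single_sub_single, trace_mul_of_mul_mul_eq hM,
    mul_div_cancel_left₀ _ two_ne_zero, eq_sub_iff_add_eq]
  exact_mod_cast rank_lapMatrix_add_card_connectedComponent G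

end Laplacian

theorem card_connectedComponent_eq_one {V : Type*} {G : SimpleGraph V}
    [Fintype G.ConnectedComponent] (hG : G.Connected) : Fintype.card G.ConnectedComponent = 1 := by
  have := hG.nonempty
  have := hG.preconnected.subsingleton_connectedComponent
  exact Fintype.card_eq_one_iff_nonempty_unique.mpr (nonempty_unique _)

/-- **Foster's theorem.**  For a finite simple connected graph on `n` vertices, the sum
of the effective resistances over all edges (each unordered edge counted once, i.e. one
half of the sum over ordered adjacent pairs) equals `n - 1`. -/
theorem foster_theorem
    {n : ℕ} (G : SimpleGraph (Fin n)) [DecidableRel G.Adj] (hG : G.Connected)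
    (M : Matrix (Fin n) (Fin n) ℝ)
    (hM : IsMoorePenroseInverse (G.lapMatrix ℝ) M) :
    (∑ i : Fin n, ∑ j : Fin n,
        if G.Adj i j then effectiveResistance M i j else 0) / 2 = (n : ℝ) - 1 := by
  have h := foster_theorem_general G M hM.1
  rwa [Fintype.card_fin, card_connectedComponent_eq_one hG, Nat.cast_one] at h
end
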